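/- Every finite simple cubic graph G admits a normal 7-edge-coloring; that is, χ'_N(G) ≤ 7. -/

import Mathlib

open SimpleGraph

/-- A proper edge-coloring: distinct edges of `G` sharing an endpoint get different colors. -/
def IsProperEdgeColoring {V C : Type*} (G : SimpleGraph V) (c : Sym2 V → C) : Prop :=
  ∀ e ∈ G.edgeSet, ∀ f ∈ G.edgeSet, e ≠ f → (∃ v : V, v ∈ e ∧ v ∈ f) → c e ≠ c f

/-- `S_c(v)`: the set of colors appearing on edges incident to `v`. -/
def colorSet {V C : Type*} (G : SimpleGraph V) (c : Sym2 V → C) (v : V) : Set C :=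
  c '' G.incidenceSet v

/-- The edge `uv` is poor: exactly 3 colors appear around its endpoints. -/
def IsPoorAt {V C : Type*} (G : SimpleGraph V) (c : Sym2 V → C) (u v : V) : Prop :=
  (colorSet G c u ∪ colorSet G c v).ncard = 3

/-- The edge `uv` is rich: exactly 5 colors appear around its endpoints. -/
def IsRichAt {V C : Type*} (G : SimpleGraph V) (c : Sym2 V → C) (u v : V) : Prop :=
  (colorSet G c u ∪ colorSet G c v).ncard = 5

/-- A normal edge-coloring: a proper edge-coloring in which every edge is poor or rich. -/
def IsNormalEdgeColoring {V C : Type*} (G : SimpleGraph V) (c : Sym2 V → C) : Prop :=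
  IsProperEdgeColoring G c ∧
    ∀ u v : V, G.Adj u v → IsPoorAt G c u v ∨ IsRichAt G c u v

/-- A nowhere-zero flow with values in an additive group `M` (all elements self-inverse in our
applications): nonzero on every edge, and at every vertex the values on incident edges sum to 0. -/
def IsNowhereZeroFlow {V M : Type*} [AddCommMonoid M] (G : SimpleGraph V)
    (θ : Sym2 V → M) : Prop :=
  (∀ e ∈ G.edgeSet, θ e ≠ 0) ∧ ∀ v : V, ∑ᶠ e ∈ G.incidenceSet v, θ e = 0

/-- `G` is `k`-edge-connected: connected, and still connected after deleting any set of
fewer than `k` edges. -/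
def EdgeConnGe {V : Type*} (G : SimpleGraph V) (k : ℕ) : Prop :=
  G.Connected ∧ ∀ s : Set (Sym2 V), s.ncard < k → (G.deleteEdges s).Connected

/-- `G` is cubic: every vertex has degree 3. -/
def IsCubic {V : Type*} (G : SimpleGraph V) : Prop :=
  ∀ v : V, (G.neighborSet v).ncard = 3

/-- `G` is bridgeless: no edge is a bridge. -/
def Bridgeless {V : Type*} (G : SimpleGraph V) : Prop :=
  ∀ e ∈ G.edgeSet, ¬ G.IsBridge e

/-!
Color with the nonzero elements of `𝔽₂³`. A nowhere-zero `𝔽₂³`-flow on a cubic graph is a normal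
coloring: next to an edge of value `z` the other two values at either end are `x` and `x + z`, and
two such pairs are equal or disjoint.

Let `X` be a set of vertices each of whose nonempty subsets is left by at least two edges. Then `X`
carries a nowhere-zero flow whose first coordinate vanishes on the edges leaving `X`. If `G[X]` has
a cut of at most one edge, combine flows on its two sides. Otherwise pass a closed trail in `X`
through the endpoints of two edges leaving `X`, and start from a flow on the rest of `X`: the trail
is nonzero in the first coordinate, so the other two coordinates, with values in the Klein
four-group, can be corrected along it and along the two edges.

A bridge carries the value zero in every flow, so the vertex set is first split along cuts of at
most one edge, the colorings of the two sides being matched by a permutation of the colors. A set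
that cannot be split and is left by exactly one edge contains a minimal nonempty set `B` left by two
edges. The rest is left by three edges, on which the values of a flow are distinct; and `B` has a
normal coloring whose colors at the two exits are so restricted that some permutation of the colors
makes it fit the flow on the rest.
-/

open Finset

section VertexSums

variable {V M : Type*} [Fintype V] [AddCommMonoid M] {G : SimpleGraph V} [DecidableRel G.Adj]

variable (G) in
/-- The sum of the values of `f` on the edges at `v`; `f` is a flow at `v` when it vanishes. -/
def vertexSum (f : Sym2 V → M) (v : V) : M :=
  ∑ w ∈ G.neighborFinset v, f s(v, w)

variable (G) in
/-- The sum of the values of `f` on the edges leaving `K`. -/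
def cutSum [DecidableEq V] (f : Sym2 V → M) (K : Finset V) : M :=
  ∑ p ∈ G.interedges K Kᶜ, f s(p.1, p.2)

theorem vertexSum_congr {f g : Sym2 V → M} {v : V} (h : ∀ w, G.Adj v w → f s(v, w) = g s(v, w)) :
    vertexSum G f v = vertexSum G g v :=
  sum_congr rfl fun w hw => h w ((G.mem_neighborFinset v w).1 hw)

theorem vertexSum_add (f g : Sym2 V → M) (v : V) :
    vertexSum G (fun e => f e + g e) v = vertexSum G f v + vertexSum G g v :=
  sum_add_distrib

theorem vertexSum_sum {ι : Type*} (s : Finset ι) (f : ι → Sym2 V → M) (v : V) :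
    vertexSum G (fun e => ∑ i ∈ s, f i e) v = ∑ i ∈ s, vertexSum G (f i) v :=
  sum_comm

theorem vertexSum_map {N F : Type*} [AddCommMonoid N] [FunLike F M N] [AddMonoidHomClass F M N]
    (g : F) (f : Sym2 V → M) (v : V) :
    vertexSum G (fun e => g (f e)) v = g (vertexSum G f v) :=
  (map_sum g _ _).symm

theorem vertexSum_edge [DecidableEq V] (m : M) {x y : V} (hxy : G.Adj x y) (v : V) :
    vertexSum G (fun e => if e = s(x, y) then m else 0) v =
      (if v = x then m else 0) + if v = y then m else 0 := by
  have edge_at_iff (w : V) : s(v, w) = s(x, y) ↔ v = x ∧ w = y ∨ v = y ∧ w = x := Sym2.eq_iff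
  by_cases hvx : v = x
  · subst hvx
    simp [vertexSum, edge_at_iff, hxy.ne, hxy]
  · by_cases hvy : v = y
    · subst hvy
      simp [vertexSum, edge_at_iff, hxy.ne', hxy.symm]
    · simp [vertexSum, edge_at_iff, hvx, hvy]

end VertexSums

section CharTwo

theorem sum_interedges_self {V M : Type*} {G : SimpleGraph V} [DecidableRel G.Adj]
    [AddCommGroup M] [Module (ZMod 2) M] (f : Sym2 V → M) (K : Finset V) :
    ∑ p ∈ G.interedges K K, f s(p.1, p.2) = 0 :=
  sum_involution (fun p _ => p.swap)
    (fun p _ => by rw [Prod.fst_swap, Prod.snd_swap, Sym2.eq_swap, ZModModule.add_self])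
    (fun p hp _ h => (G.mem_interedges_iff.1 hp).2.2.ne (congrArg Prod.snd h))
    (fun p hp => (G.swap_mem_interedges_iff).2 hp) (fun p _ => p.swap_swap)

variable {V M : Type*} [Fintype V] [DecidableEq V] {G : SimpleGraph V} [DecidableRel G.Adj]
variable [AddCommGroup M] [Module (ZMod 2) M]

theorem sum_vertexSum_eq_cutSum (f : Sym2 V → M) (K : Finset V) :
    ∑ v ∈ K, vertexSum G f v = cutSum G f K := by
  have split_at (v : V) : vertexSum G f v =
      ∑ w ∈ K with G.Adj v w, f s(v, w) + ∑ w ∈ Kᶜ with G.Adj v w, f s(v, w) := by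
    rw [← sum_union (disjoint_filter_filter disjoint_compl_right), ← filter_union, union_compl]
    exact sum_congr (G.neighborFinset_eq_filter) fun _ _ => rfl
  have sum_out (B : Finset V) :
      ∑ v ∈ K, ∑ w ∈ B with G.Adj v w, f s(v, w) = ∑ p ∈ G.interedges K B, f s(p.1, p.2) := by
    simp only [interedges_def, sum_filter, sum_product]
  rw [sum_congr rfl fun v _ => split_at v, sum_add_distrib, sum_out, sum_out,
    sum_interedges_self, zero_add, cutSum]

theorem cutSum_eq_zero {f : Sym2 V → M} {K : Finset V} (hf : ∀ v ∈ K, vertexSum G f v = 0) :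
    cutSum G f K = 0 := by
  rw [← sum_vertexSum_eq_cutSum, sum_eq_zero hf]

theorem vertexSum_count_edges {a b : V} (w : G.Walk a b) (m : M) (v : V) :
    vertexSum G (fun e => w.edges.count e • m) v =
      (if v = a then m else 0) + if v = b then m else 0 := by
  induction w with
  | nil => simp [vertexSum, ZModModule.add_self]
  | @cons a c b hac w ih =>
    have split_edge (e : Sym2 V) : (Walk.cons hac w).edges.count e • m =
        w.edges.count e • m + if e = s(a, c) then m else 0 := by
      by_cases h : e = s(a, c) <;> simp [h, add_smul, eq_comm]
    simp only [split_edge, vertexSum_add, ih, vertexSum_edge m hac]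
    rw [add_comm, add_assoc, ← add_assoc (ite (v = c) m 0), ZModModule.add_self, zero_add]

theorem vertexSum_trail_eq_zero {a : V} {w : G.Walk a a} (hw : w.IsTrail) (m : M) (v : V) :
    vertexSum G (fun e => if e ∈ w.edges then m else 0) v = 0 := by
  have indicator_eq (e : Sym2 V) : (if e ∈ w.edges then m else 0) = w.edges.count e • m := by
    split_ifs with he
    · rw [List.count_eq_one_of_mem hw.edges_nodup he, one_smul]
    · rw [List.count_eq_zero_of_not_mem he, zero_smul]
  simp only [indicator_eq, vertexSum_count_edges, ZModModule.add_self]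

-- Sending each vertex's excess back to the start of the walk cancels it everywhere else.
theorem exists_flow_eq_off_walk {a b : V} (w : G.Walk a b) (g : Sym2 V → M)
    (hg : ∑ v ∈ w.support.toFinset, vertexSum G g v = 0) :
    ∃ g' : Sym2 V → M, (∀ e, e ∉ w.edges → g' e = g e) ∧
      ∀ v ∈ w.support, vertexSum G g' v = 0 := by
  let correction (v : V) (e : Sym2 V) : M :=
    if h : v ∈ w.support then (w.takeUntil v h).edges.count e • vertexSum G g v else 0
  have vertexSum_correction {v : V} (hv : v ∈ w.support) (u : V) :
      vertexSum G (correction v) u =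
        (if u = a then vertexSum G g v else 0) + if u = v then vertexSum G g v else 0 := by
    simp only [correction, dif_pos hv, vertexSum_count_edges]
  refine ⟨fun e => g e + ∑ v ∈ w.support.toFinset, correction v e, fun e he => ?_, fun u hu => ?_⟩
  · refine (congrArg (g e + ·) (sum_eq_zero fun v hv => ?_)).trans (add_zero _)
    have he' : e ∉ (w.takeUntil v (List.mem_toFinset.1 hv)).edges :=
      fun h => he (w.edges_takeUntil_subset_edges _ h)
    rw [show correction v e = _ from dif_pos (List.mem_toFinset.1 hv),
      List.count_eq_zero_of_not_mem he', zero_smul]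
  · rw [vertexSum_add, vertexSum_sum,
      sum_congr rfl fun v hv => vertexSum_correction (List.mem_toFinset.1 hv) u,
      sum_add_distrib, sum_ite_eq, if_pos (List.mem_toFinset.2 hu)]
    rw [show ∑ v ∈ w.support.toFinset, (if u = a then vertexSum G g v else 0) = 0 by
      split_ifs <;> simp [hg], zero_add, ZModModule.add_self]

end CharTwo

section ClosedTrails

variable {V : Type*} {H : SimpleGraph V}

theorem exists_walk_to_first_mem {u v : V} (p : H.Walk u v) {S : Set V} (hv : v ∈ S) :
    ∃ x ∈ S, ∃ q : H.Walk u x, q.edges ⊆ p.edges ∧ ∀ y ∈ q.support, y ∈ S → y = x := by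
  induction p with
  | nil => exact ⟨_, hv, .nil, by simp, by simp⟩
  | @cons u c v huc p ih =>
    by_cases hu : u ∈ S
    · exact ⟨u, hu, .nil, by simp, by simp⟩
    · obtain ⟨x, hx, q, hqp, hq⟩ := ih hv
      refine ⟨x, hx, .cons huc q, by simp; grind, fun y hy hyS => ?_⟩
      rcases List.mem_cons.1 (by simpa using hy) with rfl | hy
      · exact absurd hyS hu
      · exact hq y hy hyS

theorem exists_isTrail_from_mem_support {a x b : V} {w : H.Walk a a} (hw : w.IsTrail)
    (hx : x ∈ w.support) (hb : b ∈ w.support) :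
    ∃ q : H.Walk x b, q.IsTrail ∧ q.edges ⊆ w.edges ∧ a ∈ q.support := by
  classical
  have hrot : (w.rotate x hx).IsTrail := hw.rotate hx
  have hbrot : b ∈ (w.rotate x hx).support := by simpa using hb
  have edges_rotate : (w.rotate x hx).edges ⊆ w.edges := (w.rotate_edges x hx).perm.subset
  have harot : a ∈ (w.rotate x hx).support := by simp
  rw [← (w.rotate x hx).take_spec hbrot, Walk.mem_support_append_iff] at harot
  rcases harot with ha | ha
  · exact ⟨_, hrot.takeUntil hbrot,
      fun e he => edges_rotate (Walk.edges_takeUntil_subset_edges _ _ he), ha⟩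
  · refine ⟨((w.rotate x hx).dropUntil b hbrot).reverse, (hrot.dropUntil hbrot).reverse,
      fun e he => edges_rotate (Walk.edges_dropUntil_subset_edges _ hbrot ?_), by simpa using ha⟩
    simpa using he

-- The path leaving `b` away from the edge `cb` meets the old trail first at `x`; from there one of
-- the two arcs of the old trail leads through `a` to `c`.
theorem exists_closed_trail_extend {a b c : V} {w : H.Walk a a} (hw : w.IsTrail)
    (hc : c ∈ w.support) (hcb : H.Adj c b) (hreach : (H.deleteEdges {s(c, b)}).Reachable b c) :
    ∃ w' : H.Walk a a, w'.IsTrail ∧ b ∈ w'.support := by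
  classical
  by_cases hb : b ∈ w.support
  · exact ⟨w, hw, hb⟩
  obtain ⟨p⟩ := hreach
  obtain ⟨x, hx, q, hqp, hq⟩ :=
    exists_walk_to_first_mem (p.mapLe (deleteEdges_le _)) (S := {v | v ∈ w.support}) hc
  obtain ⟨r, hr, hrw, har⟩ := exists_isTrail_from_mem_support hw hx hc
  have hq_disjoint : ∀ e ∈ q.bypass.edges, e ∉ w.edges := by
    intro e heq hew
    induction e with | _ y z =>
    have hy := hq y (q.support_bypass_subset_support (Walk.fst_mem_support_of_mem_edges _ heq))
      (Walk.fst_mem_support_of_mem_edges _ hew)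
    have hz := hq z (q.support_bypass_subset_support (Walk.snd_mem_support_of_mem_edges _ heq))
      (Walk.snd_mem_support_of_mem_edges _ hew)
    exact (Walk.adj_of_mem_edges _ heq).ne (hy.trans hz.symm)
  have hcb_edge : s(c, b) ∉ (q.bypass.append r).edges := by
    rw [Walk.edges_append, List.mem_append, not_or]
    refine ⟨fun h => ?_, fun h => hb (Walk.snd_mem_support_of_mem_edges _ (hrw h))⟩
    have := hqp (q.edges_bypass_subset_edges h)
    rw [Walk.edges_mapLe_eq_edges] at this
    simpa using p.edges_subset_edgeSet this
  have htrail : (Walk.cons hcb (q.bypass.append r)).IsTrail := by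
    rw [Walk.isTrail_cons, Walk.isTrail_append]
    exact ⟨⟨q.bypass_isPath.isTrail, hr, fun e he her => hq_disjoint e he (hrw her)⟩, hcb_edge⟩
  have ha : a ∈ (Walk.cons hcb (q.bypass.append r)).support := by simp [har]
  exact ⟨_, htrail.rotate ha, by simp⟩

theorem exists_closed_trail_mem_support (hH : H.IsEdgeConnected 2) (a b : V) :
    ∃ w : H.Walk a a, w.IsTrail ∧ b ∈ w.support := by
  obtain ⟨p⟩ := hH.preconnected two_ne_zero b a
  induction p with
  | nil => exact ⟨.nil, .nil, by simp⟩
  | @cons b c a hbc _ ih =>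
    obtain ⟨w, hw, hc⟩ := ih
    exact exists_closed_trail_extend hw hc hbc.symm (isEdgeReachable_two.1 (hH b c) _)

theorem exists_closed_trail_in {X : Set V} (hX : (H.induce X).IsEdgeConnected 2)
    {a b : V} (ha : a ∈ X) (hb : b ∈ X) :
    ∃ w : H.Walk a a, w.IsTrail ∧ b ∈ w.support ∧ ∀ v ∈ w.support, v ∈ X := by
  obtain ⟨w, hw, hbw⟩ := exists_closed_trail_mem_support hX ⟨a, ha⟩ ⟨b, hb⟩
  let ι : H.induce X →g H := (Embedding.induce X).toHom
  have support_map : (w.map ι).support = w.support.map ι := w.support_map ι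
  refine ⟨w.map ι, hw.map Subtype.val_injective, ?_, fun v hv => ?_⟩
  · exact support_map ▸ List.mem_map_of_mem hbw
  · obtain ⟨x, -, rfl⟩ := List.mem_map.1 (support_map ▸ hv)
    exact x.2

end ClosedTrails

section Cuts

theorem card_interedges_comm {V : Type*} {G : SimpleGraph V} [DecidableRel G.Adj]
    (A B : Finset V) : #(G.interedges A B) = #(G.interedges B A) :=
  have := G.symm
  Rel.card_interedges_comm A B

theorem injOn_mk_interedges {V : Type*} {G : SimpleGraph V} [DecidableRel G.Adj]
    {A B : Finset V} (hAB : Disjoint A B) :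
    Set.InjOn (fun p : V × V => s(p.1, p.2)) (G.interedges A B) := by
  rintro ⟨x, y⟩ hp ⟨x', y'⟩ hq h
  rcases Sym2.eq_iff.1 h with h | ⟨rfl, rfl⟩
  · exact Prod.ext h.1 h.2
  · exact absurd (G.mk_mem_interedges_iff.1 hq).2.1
      (disjoint_left.1 hAB (G.mk_mem_interedges_iff.1 hp).1)

variable {V : Type*} [DecidableEq V] {G : SimpleGraph V} [DecidableRel G.Adj]

theorem exists_ssubset_card_interedges_le_one {X : Finset V}
    (hX : ¬ (G.induce (X : Set V)).IsEdgeConnected 2) {v : V} (hv : v ∈ X) :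
    ∃ K ⊂ X, v ∈ K ∧ #(G.interedges K (X \ K)) ≤ 1 := by
  classical
  rw [isEdgeConnected_two] at hX
  push Not at hX
  obtain ⟨e, he⟩ := hX
  set H := (G.induce (X : Set V)).deleteEdges {e}
  let K : Finset V := {x ∈ X | ∃ hx : x ∈ X, H.Reachable ⟨v, hv⟩ ⟨x, hx⟩}
  have mem_K {x : V} (hx : x ∈ X) : x ∈ K ↔ H.Reachable ⟨v, hv⟩ ⟨x, hx⟩ := by simp [K, hx]
  have hKX : K ≠ X := fun h => he fun x y =>
    ((mem_K x.2).1 (h.symm ▸ x.2)).symm.trans ((mem_K y.2).1 (h.symm ▸ y.2))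
  refine ⟨K, (filter_subset _ _).ssubset_of_ne hKX, (mem_K hv).2 .rfl, ?_⟩
  have leaving_edge {x y : V} (h : (x, y) ∈ G.interedges K (X \ K)) :
      e.map Subtype.val = s(x, y) := by
    obtain ⟨hxK, hy, hxy⟩ := G.mk_mem_interedges_iff.1 h
    have hx : x ∈ X := filter_subset _ _ hxK
    obtain ⟨hy, hyK⟩ := mem_sdiff.1 hy
    by_contra hne
    refine hyK ((mem_K hy).2 (((mem_K hx).1 hxK).trans (Adj.reachable ?_)))
    refine deleteEdges_adj.2 ⟨hxy, fun h => hne ?_⟩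
    rw [← Set.mem_singleton_iff.1 h, Sym2.map_mk]
  rw [card_le_one]
  rintro ⟨x, y⟩ hp ⟨x', y'⟩ hq
  exact injOn_mk_interedges disjoint_sdiff hp hq ((leaving_edge hp).symm.trans (leaving_edge hq))

theorem card_interedges_union_right (A : Finset V) {B B' : Finset V} (h : Disjoint B B') :
    #(G.interedges A (B ∪ B')) = #(G.interedges A B) + #(G.interedges A B') := by
  rw [← card_union_of_disjoint (G.interedges_disjoint_right A h)]
  congr 1
  ext p
  simp only [mem_union, mem_interedges_iff]
  tauto

variable [Fintype V]

variable (G) in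
/-- The number of edges leaving `K`. -/
def cutSize (K : Finset V) : ℕ :=
  #(G.interedges K Kᶜ)

theorem cutSize_of_subset {A X : Finset V} (h : A ⊆ X) :
    cutSize G A = #(G.interedges A (X \ A)) + #(G.interedges A Xᶜ) := by
  have hcompl : Aᶜ = X \ A ∪ Xᶜ := by grind [mem_compl]
  rw [cutSize, hcompl, card_interedges_union_right]
  exact disjoint_compl_right.mono_left sdiff_subset

theorem cutSize_add_cutSize {A B : Finset V} (h : Disjoint A B) :
    cutSize G A + cutSize G B = cutSize G (A ∪ B) + 2 * #(G.interedges A B) := by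
  have hA : (A ∪ B) \ A = B := union_sdiff_cancel_left h
  have hB : (A ∪ B) \ B = A := union_sdiff_cancel_right h
  have hAB : cutSize G (A ∪ B) = #(G.interedges A (A ∪ B)ᶜ) + #(G.interedges B (A ∪ B)ᶜ) := by
    simp only [cutSize, card_interedges_comm _ (A ∪ B)ᶜ, card_interedges_union_right _ h]
  rw [cutSize_of_subset (G := G) (subset_union_left (s₁ := A) (s₂ := B)),
    cutSize_of_subset (G := G) (subset_union_right (s₁ := A) (s₂ := B)), hA, hB, hAB,
    card_interedges_comm B A]
  ring

end Cuts

section Glue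

variable {V C : Type*} {A : Finset V} {f g : Sym2 V → C} {x y : V}

theorem mk_ne_mk_of_notMem {v o : V} (hx : x ∈ A) (hy : y ∈ A) (ho : o ∉ A) :
    s(x, y) ≠ s(v, o) := by
  rintro h
  rcases Sym2.eq_iff.1 h with ⟨-, rfl⟩ | ⟨rfl, -⟩ <;> exact ho ‹_›

theorem mk_eq_mk_of_mem_notMem {v o : V} (hx : x ∈ A) (ho : o ∉ A) (h : s(x, y) = s(v, o)) :
    (x, y) = (v, o) := by
  rcases Sym2.eq_iff.1 h with ⟨rfl, rfl⟩ | ⟨rfl, -⟩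
  · rfl
  · exact absurd hx ho

theorem mk_ne_mk_of_mem {v o : V} (hx : x ∈ A) (hv : v ∉ A) (ho : o ∉ A) : s(x, y) ≠ s(v, o) := by
  rintro h
  obtain ⟨rfl, -⟩ := Prod.mk_inj.1 (mk_eq_mk_of_mem_notMem hx ho h)
  exact hv hx

open Classical in
/-- The function equal to `f` on the edges meeting `A` and to `g` on all other edges. -/
noncomputable def glue (A : Finset V) (f g : Sym2 V → C) (e : Sym2 V) : C :=
  if ∃ z ∈ e, z ∈ A then f e else g e

theorem glue_of_mem (hx : x ∈ A) : glue A f g s(x, y) = f s(x, y) :=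
  if_pos ⟨x, Sym2.mem_mk_left x y, hx⟩

theorem glue_of_notMem (hx : x ∉ A) (hy : y ∉ A) : glue A f g s(x, y) = g s(x, y) :=
  if_neg fun ⟨_, hz, hzA⟩ => (Sym2.mem_iff.1 hz).elim (fun h => hx (h ▸ hzA)) fun h => hy (h ▸ hzA)

theorem glue_of_notMem_left (hx : x ∉ A) (h : y ∈ A → f s(x, y) = g s(x, y)) :
    glue A f g s(x, y) = g s(x, y) := by
  by_cases hy : y ∈ A
  · rw [Sym2.eq_swap, glue_of_mem hy, Sym2.eq_swap, h hy]
  · exact glue_of_notMem hx hy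

end Glue

section KleinFour

/-- The Klein four-group, as a vector space over the field with two elements. -/
abbrev KleinFour : Type := ZMod 2 × ZMod 2

/-- The group of flow values. Its seven nonzero elements, the points of the Fano plane, serve as
colors; the first coordinate is singled out because flows on pieces of the graph vanish there on the
boundary. -/
abbrev Color : Type := ZMod 2 × KleinFour

/-- The linear map sending the standard basis of `KleinFour` to `a`, `b`. -/
def kleinMap (a b : KleinFour) : KleinFour →+ KleinFour where
  toFun x := x.1 • a + x.2 • b
  map_zero' := by simp
  map_add' x y := by
    simp only [Prod.fst_add, Prod.snd_add, add_smul]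
    abel

theorem exists_kleinMap_injective_apply : ∀ m₁ m₂ y y₁ : KleinFour, m₁ ≠ 0 → m₂ ≠ 0 → y ≠ 0 →
    y₁ ≠ m₁ → ∃ a b, Function.Injective (kleinMap a b) ∧
      kleinMap a b m₂ = m₁ ∧ kleinMap a b y ≠ y₁ := by
  decide +kernel

theorem exists_ne_ne_ne : ∀ x y z : KleinFour, ∃ α, α ≠ x ∧ α ≠ y ∧ α ≠ z := by
  decide

end KleinFour

section RelativeFlows

variable {V : Type*} [Fintype V] {G : SimpleGraph V} [DecidableRel G.Adj]
variable {X : Finset V} {F : Sym2 V → Color}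

variable (G) in
/-- A nowhere-zero flow on the edges meeting `X`, conserved at the vertices of `X`. -/
structure IsFlowOn {M : Type*} [AddCommMonoid M] (X : Finset V) (F : Sym2 V → M) : Prop where
  vertexSum_eq_zero : ∀ v ∈ X, vertexSum G F v = 0
  ne_zero : ∀ v ∈ X, ∀ u, G.Adj v u → F s(v, u) ≠ 0

theorem IsFlowOn.update [DecidableEq V] {M : Type*} [AddCommMonoid M] {F : Sym2 V → M}
    (hF : IsFlowOn G X F) {v a : V} (hv : v ∉ X) (ha : a ∉ X) (m : M) :
    IsFlowOn G X (Function.update F s(v, a) m) where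
  vertexSum_eq_zero u hu := by
    rw [vertexSum_congr fun x _ => Function.update_of_ne (mk_ne_mk_of_mem hu hv ha) ..,
      hF.vertexSum_eq_zero u hu]
  ne_zero u hu x hux := by
    rw [Function.update_of_ne (mk_ne_mk_of_mem hu hv ha)]
    exact hF.ne_zero u hu x hux

variable (G) in
/-- A nowhere-zero flow on the edges meeting `X` whose first coordinate vanishes on the edges
leaving `X`. -/
structure IsRelativeFlow (X : Finset V) (F : Sym2 V → Color) : Prop extends IsFlowOn G X F where
  fst_eq_zero : ∀ v ∈ X, ∀ u, G.Adj v u → u ∉ X → (F s(v, u)).1 = 0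

namespace IsRelativeFlow

theorem snd_ne_zero (hF : IsRelativeFlow G X F) {v u : V} (hv : v ∈ X) (hvu : G.Adj v u)
    (hu : u ∉ X) : (F s(v, u)).2 ≠ 0 :=
  fun h => hF.ne_zero v hv u hvu (Prod.ext (hF.fst_eq_zero v hv u hvu hu) h)

theorem empty : IsRelativeFlow G ∅ F :=
  ⟨⟨by simp, by simp⟩, by simp⟩

theorem map (hF : IsRelativeFlow G X F) {g : KleinFour →+ KleinFour} (hg : Function.Injective g) :
    IsRelativeFlow G X (fun e => ((F e).1, g (F e).2)) where
  vertexSum_eq_zero v hv := by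
    let φ : Color →+ Color := (AddMonoidHom.id _).prodMap g
    change vertexSum G (fun e => φ (F e)) v = 0
    rw [vertexSum_map, hF.vertexSum_eq_zero v hv, map_zero]
  ne_zero v hv u hvu h := hF.ne_zero v hv u hvu
    (Prod.ext (Prod.mk_eq_zero.1 h).1 ((map_eq_zero_iff g hg).1 (Prod.mk_eq_zero.1 h).2))
  fst_eq_zero := hF.fst_eq_zero

variable {K₁ K₂ : Finset V} {F₁ F₂ : Sym2 V → Color}

theorem exists_map_eq_on_interedges (h₁ : IsRelativeFlow G K₁ F₁) (h₂ : IsRelativeFlow G K₂ F₂)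
    (hd : Disjoint K₁ K₂) (hcard : #(G.interedges K₁ K₂) ≤ 1) {y y₁ : KleinFour} (hy : y ≠ 0)
    (hy₁ : ∀ x ∈ K₁, ∀ z ∈ K₂, G.Adj x z → y₁ ≠ (F₁ s(x, z)).2) :
    ∃ g : KleinFour →+ KleinFour, Function.Injective g ∧ g y ≠ y₁ ∧
      ∀ x ∈ K₁, ∀ z ∈ K₂, G.Adj x z → (F₁ s(x, z)).2 = g (F₂ s(x, z)).2 := by
  rcases (G.interedges K₁ K₂).eq_empty_or_nonempty with hempty | ⟨⟨x, z⟩, hxz⟩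
  · obtain ⟨m, hm, hm₁, -⟩ := exists_ne_ne_ne 0 y₁ 0
    obtain ⟨a, b, hinj, -, hne⟩ := exists_kleinMap_injective_apply m y y y₁ hm hy hy hm₁.symm
    refine ⟨kleinMap a b, hinj, hne, fun x hx z hz hxz => ?_⟩
    exact absurd (G.mk_mem_interedges_iff.2 ⟨hx, hz, hxz⟩) (hempty ▸ notMem_empty _)
  · obtain ⟨hx, hz, hadj⟩ := G.mk_mem_interedges_iff.1 hxz
    have hne₁ := h₁.snd_ne_zero hx hadj (disjoint_right.1 hd hz)
    have hne₂ := h₂.snd_ne_zero hz hadj.symm (disjoint_left.1 hd hx)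
    rw [Sym2.eq_swap] at hne₂
    obtain ⟨a, b, hinj, heq, hne⟩ :=
      exists_kleinMap_injective_apply _ _ y y₁ hne₁ hne₂ hy (hy₁ x hx z hz hadj)
    refine ⟨kleinMap a b, hinj, hne, fun x' hx' z' hz' hadj' => ?_⟩
    obtain ⟨rfl, rfl⟩ := Prod.mk_inj.1
      (card_le_one.1 hcard _ (G.mk_mem_interedges_iff.2 ⟨hx', hz', hadj'⟩) _ hxz)
    exact heq.symm

variable [DecidableEq V]

theorem union (h₁ : IsRelativeFlow G K₁ F₁) (h₂ : IsRelativeFlow G K₂ F₂) (hd : Disjoint K₁ K₂)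
    (hagree : ∀ x ∈ K₁, ∀ y ∈ K₂, G.Adj x y → F₁ s(x, y) = F₂ s(x, y)) :
    IsRelativeFlow G (K₁ ∪ K₂) (glue K₁ F₁ F₂) := by
  have eq₂ {x y : V} (hx : x ∈ K₂) (hxy : G.Adj x y) : glue K₁ F₁ F₂ s(x, y) = F₂ s(x, y) :=
    glue_of_notMem_left (disjoint_right.1 hd hx) fun hy => by
      rw [Sym2.eq_swap, hagree y hy x hx hxy.symm]
  refine ⟨⟨fun v hv => ?_, fun v hv u hvu => ?_⟩, fun v hv u hvu hu => ?_⟩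
  · rcases mem_union.1 hv with hv | hv
    · rw [vertexSum_congr fun w _ => glue_of_mem hv, h₁.vertexSum_eq_zero v hv]
    · rw [vertexSum_congr fun w hvw => eq₂ hv hvw, h₂.vertexSum_eq_zero v hv]
  · rcases mem_union.1 hv with hv | hv
    · exact glue_of_mem hv ▸ h₁.ne_zero v hv u hvu
    · exact eq₂ hv hvu ▸ h₂.ne_zero v hv u hvu
  · rw [mem_union, not_or] at hu
    rcases mem_union.1 hv with hv | hv
    · exact glue_of_mem hv ▸ h₁.fst_eq_zero v hv u hvu hu.1
    · exact eq₂ hv hvu ▸ h₂.fst_eq_zero v hv u hvu hu.2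

theorem exists_union_map (h₁ : IsRelativeFlow G K₁ F₁) (h₂ : IsRelativeFlow G K₂ F₂)
    (hd : Disjoint K₁ K₂) (hcard : #(G.interedges K₁ K₂) ≤ 1) {y y₁ : KleinFour} (hy : y ≠ 0)
    (hy₁ : ∀ x ∈ K₁, ∀ z ∈ K₂, G.Adj x z → y₁ ≠ (F₁ s(x, z)).2) :
    ∃ F, IsRelativeFlow G (K₁ ∪ K₂) F ∧ (∀ x ∈ K₁, ∀ z, F s(x, z) = F₁ s(x, z)) ∧
      ∃ g : KleinFour →+ KleinFour, g y ≠ y₁ ∧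
        ∀ x ∈ K₂, ∀ z, G.Adj x z → F s(x, z) = ((F₂ s(x, z)).1, g (F₂ s(x, z)).2) := by
  obtain ⟨g, hg, hgy, heq⟩ := h₁.exists_map_eq_on_interedges h₂ hd hcard hy hy₁
  have hagree : ∀ x ∈ K₁, ∀ z ∈ K₂, G.Adj x z →
      F₁ s(x, z) = ((F₂ s(x, z)).1, g (F₂ s(x, z)).2) := by
    intro x hx z hz hxz
    have h := h₂.fst_eq_zero z hz x hxz.symm (disjoint_left.1 hd hx)
    rw [Sym2.eq_swap] at h
    exact Prod.ext ((h₁.fst_eq_zero x hx z hxz (disjoint_right.1 hd hz)).trans h.symm)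
      (heq x hx z hz hxz)
  refine ⟨_, h₁.union (h₂.map hg) hd hagree, fun x hx z => glue_of_mem hx, g, hgy, ?_⟩
  intro x hx z hxz
  refine glue_of_notMem_left (disjoint_right.1 hd hx) fun hz => ?_
  rw [Sym2.eq_swap]
  exact hagree z hz x hx hxz.symm

theorem exists_union (h₁ : IsRelativeFlow G K₁ F₁) (h₂ : IsRelativeFlow G K₂ F₂)
    (hd : Disjoint K₁ K₂) (hcard : #(G.interedges K₁ K₂) ≤ 1) :
    ∃ F, IsRelativeFlow G (K₁ ∪ K₂) F ∧ (∀ x ∈ K₁, ∀ z, F s(x, z) = F₁ s(x, z)) := by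
  obtain ⟨F, hF, heq, -⟩ := h₁.exists_union_map h₂ hd hcard (y := (1, 0)) (by decide)
    fun x hx z hz hxz => (h₁.snd_ne_zero hx hxz (disjoint_right.1 hd hz)).symm
  exact ⟨F, hF, heq⟩

end IsRelativeFlow

end RelativeFlows

section Absorb

theorem exists_klein_flow_on_walk {V : Type*} [Fintype V] {G : SimpleGraph V} [DecidableRel G.Adj]
    {a b : V} (w : G.Walk a b) {v₁ o₁ v₃ o₃ : V}
    (hv₁ : v₁ ∈ w.support) (ho₁ : o₁ ∉ w.support) (h₁ : G.Adj v₁ o₁)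
    (hv₃ : v₃ ∈ w.support) (ho₃ : o₃ ∉ w.support) (h₃ : G.Adj v₃ o₃)
    (hne : s(v₁, o₁) ≠ s(v₃, o₃)) (g : Sym2 V → KleinFour) (avoid : KleinFour) :
    ∃ g' : Sym2 V → KleinFour, (∀ v ∈ w.support, vertexSum G g' v = 0) ∧
      (∀ e, e ∉ w.edges → e ≠ s(v₁, o₁) → e ≠ s(v₃, o₃) → g' e = g e) ∧
      g' s(v₁, o₁) ≠ 0 ∧ g' s(v₃, o₃) ≠ 0 ∧ g' s(v₁, o₁) ≠ avoid := by
  classical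
  set τ := ∑ v ∈ w.support.toFinset, vertexSum G g v with hτ
  obtain ⟨α, hα, hα', hατ⟩ :=
    exists_ne_ne_ne (g s(v₁, o₁)) (g s(v₁, o₁) + avoid) (g s(v₃, o₃) + τ)
  let shifted : Sym2 V → KleinFour := fun e =>
    (g e + if e = s(v₁, o₁) then α else 0) + if e = s(v₃, o₃) then α + τ else 0
  have sum_shifted : ∑ v ∈ w.support.toFinset, vertexSum G shifted v = 0 := by
    simp only [shifted, vertexSum_add, vertexSum_edge _ h₁, vertexSum_edge _ h₃,
      sum_add_distrib, sum_ite_eq', List.mem_toFinset, hv₁, ho₁, hv₃, ho₃, if_true, if_false, ← hτ]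
    rw [add_zero, add_zero, add_comm α τ, ZModModule.add_self]
  obtain ⟨g', hg', hflow⟩ := exists_flow_eq_off_walk w shifted sum_shifted
  have hedge {v o : V} (ho : o ∉ w.support) : s(v, o) ∉ w.edges :=
    fun h => ho (w.snd_mem_support_of_mem_edges h)
  have solve_right : ∀ x y z : KleinFour, x + y = z → y = x + z := by decide
  refine ⟨g', hflow, fun e he he₁ he₃ => ?_, fun h => hα ?_, fun h => hατ ?_, fun h => hα' ?_⟩
  · simp [hg' e he, shifted, he₁, he₃]
  · rw [hg' _ (hedge ho₁)] at h
    rw [solve_right _ _ _ (by simpa [shifted, hne] using h : g s(v₁, o₁) + α = 0), add_zero]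
  · rw [hg' _ (hedge ho₃)] at h
    have := solve_right _ _ _ (by simpa [shifted, hne.symm] using h : g s(v₃, o₃) + (α + τ) = 0)
    rw [add_comm α τ, add_zero] at this
    rw [solve_right _ _ _ this, add_comm]
  · rw [hg' _ (hedge ho₁)] at h
    exact solve_right _ _ _ (by simpa [shifted, hne] using h)

variable {V : Type*} [Fintype V] [DecidableEq V] {G : SimpleGraph V} [DecidableRel G.Adj]

theorem isRelativeFlow_support_closed_trail {a : V} {w : G.Walk a a} (hw : w.IsTrail)
    {g : Sym2 V → KleinFour} (hflow : ∀ v ∈ w.support, vertexSum G g v = 0)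
    (hne : ∀ v ∈ w.support, ∀ u, G.Adj v u → s(v, u) ∉ w.edges → g s(v, u) ≠ 0) :
    IsRelativeFlow G w.support.toFinset (fun e => (if e ∈ w.edges then 1 else 0, g e)) where
  vertexSum_eq_zero v hv := by
    apply Prod.ext
    · rw [← AddMonoidHom.coe_fst, ← vertexSum_map]
      exact vertexSum_trail_eq_zero hw 1 v
    · rw [← AddMonoidHom.coe_snd, ← vertexSum_map]
      exact hflow v (List.mem_toFinset.1 hv)
  ne_zero v hv u hvu h := by
    obtain ⟨h₁, h₂⟩ := Prod.mk_eq_zero.1 h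
    by_cases he : s(v, u) ∈ w.edges
    · simp [he] at h₁
    · exact hne v (List.mem_toFinset.1 hv) u hvu he h₂
  fst_eq_zero _ _ _ _ hu :=
    if_neg fun h => hu (List.mem_toFinset.2 (w.snd_mem_support_of_mem_edges h))

theorem exists_relativeFlow_support_closed_trail {a : V} {w : G.Walk a a} (hw : w.IsTrail)
    {v₁ o₁ v₃ o₃ : V} (hv₁ : v₁ ∈ w.support) (ho₁ : o₁ ∉ w.support) (h₁ : G.Adj v₁ o₁)
    (hv₃ : v₃ ∈ w.support) (ho₃ : o₃ ∉ w.support) (h₃ : G.Adj v₃ o₃)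
    (hne : s(v₁, o₁) ≠ s(v₃, o₃)) {g : Sym2 V → KleinFour}
    (hg : ∀ v ∈ w.support, ∀ u, G.Adj v u → g s(v, u) ≠ 0) (avoid : KleinFour) :
    ∃ F, IsRelativeFlow G w.support.toFinset F ∧ (∀ e ∈ w.edges, (F e).1 ≠ 0) ∧
      (∀ e, e ∉ w.edges → e ≠ s(v₁, o₁) → e ≠ s(v₃, o₃) → F e = (0, g e)) ∧
      (F s(v₁, o₁)).2 ≠ avoid := by
  obtain ⟨g', hflow, hg', hg₁, hg₃, hg_avoid⟩ :=
    exists_klein_flow_on_walk w hv₁ ho₁ h₁ hv₃ ho₃ h₃ hne g avoid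
  refine ⟨_, isRelativeFlow_support_closed_trail hw hflow fun v hv u hvu he => ?_,
    fun e he => by simp [he], fun e he he₁ he₃ => by simp [he, hg' e he he₁ he₃], hg_avoid⟩
  by_cases he₁ : s(v, u) = s(v₁, o₁)
  · exact he₁ ▸ hg₁
  by_cases he₃ : s(v, u) = s(v₃, o₃)
  · exact he₃ ▸ hg₃
  exact hg' _ he he₁ he₃ ▸ hg v hv u hvu

theorem IsRelativeFlow.exists_absorb_closed_trail {X : Finset V} {a : V} {w : G.Walk a a}
    (hw : w.IsTrail) (hwX : ∀ v ∈ w.support, v ∈ X) {F' : Sym2 V → Color}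
    (hF' : IsRelativeFlow G (X \ w.support.toFinset) F') {v₁ o₁ v₃ o₃ : V}
    (hv₁ : v₁ ∈ w.support) (ho₁ : o₁ ∉ X) (h₁ : G.Adj v₁ o₁)
    (hv₃ : v₃ ∈ w.support) (ho₃ : o₃ ∉ X) (h₃ : G.Adj v₃ o₃)
    (hne : s(v₁, o₁) ≠ s(v₃, o₃)) (e₂ : Sym2 V) :
    ∃ F, IsRelativeFlow G X F ∧ (∀ x ∈ X \ w.support.toFinset, ∀ z, F s(x, z) = F' s(x, z)) ∧
      (∀ e ∈ w.edges, (F e).1 ≠ 0) ∧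
      (e₂ ∉ w.edges → e₂ ≠ s(v₁, o₁) → e₂ ≠ s(v₃, o₃) → F s(v₁, o₁) ≠ F e₂) := by
  set D := w.support.toFinset
  have hDX : D ⊆ X := fun v hv => hwX v (List.mem_toFinset.1 hv)
  have edge_notMem {x y : V} (hx : x ∉ D) : s(x, y) ∉ w.edges :=
    fun h => hx (List.mem_toFinset.2 (w.fst_mem_support_of_mem_edges h))
  let g₀ : Sym2 V → KleinFour := glue (X \ D) (fun e => (F' e).2) fun _ => (1, 0)
  have hg₀ : ∀ v ∈ w.support, ∀ u, G.Adj v u → g₀ s(v, u) ≠ 0 := by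
    intro v hv u hvu
    have hvD : v ∉ X \ D := fun h => (mem_sdiff.1 h).2 (List.mem_toFinset.2 hv)
    by_cases hu : u ∈ X \ D
    · rw [Sym2.eq_swap, show g₀ s(u, v) = _ from glue_of_mem hu]
      exact hF'.snd_ne_zero hu hvu.symm hvD
    · rw [show g₀ _ = _ from glue_of_notMem hvD hu]
      decide
  obtain ⟨FD, hFD, hFD_fst, hFD_eq, havoid⟩ := exists_relativeFlow_support_closed_trail hw hv₁
    (fun h => ho₁ (hwX _ h)) h₁ hv₃ (fun h => ho₃ (hwX _ h)) h₃ hne hg₀ (g₀ e₂)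
  have hF := hF'.union hFD sdiff_disjoint fun x hx y hy hxy => by
    have hne {v o : V} (ho : o ∉ X) : s(x, y) ≠ s(v, o) :=
      mk_ne_mk_of_notMem (mem_sdiff.1 hx).1 (hDX hy) ho
    rw [hFD_eq _ (edge_notMem (mem_sdiff.1 hx).2) (hne ho₁) (hne ho₃)]
    exact Prod.ext (hF'.fst_eq_zero x hx y hxy fun h => (mem_sdiff.1 h).2 hy)
      (by simp only [g₀, glue_of_mem hx])
  rw [sdiff_union_of_subset hDX] at hF
  refine ⟨_, hF, fun x hx z => glue_of_mem hx, fun e he => ?_, fun he he₁ he₃ heq => havoid ?_⟩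
  · induction e with
    | h x y =>
      rw [glue_of_notMem (fun h => edge_notMem (mem_sdiff.1 h).2 he)
        fun h => edge_notMem (mem_sdiff.1 h).2 (Sym2.eq_swap (a := x) ▸ he)]
      exact hFD_fst _ he
  · have hv₁D : v₁ ∉ X \ D := fun h => (mem_sdiff.1 h).2 (List.mem_toFinset.2 hv₁)
    rw [glue_of_notMem hv₁D fun h => ho₁ (mem_sdiff.1 h).1] at heq
    rw [heq]
    by_cases hX : ∃ z ∈ e₂, z ∈ X \ D
    · simp only [g₀, glue, if_pos hX]
    · simp only [glue, if_neg hX, hFD_eq e₂ he he₁ he₃]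

end Absorb

section ExistenceOfFlows

variable {V : Type*} [Fintype V] [DecidableEq V] {G : SimpleGraph V} [DecidableRel G.Adj]
variable {X Y : Finset V} {k : ℕ}

variable (G) in
/-- Every nonempty subset of `X` has at least `k` edges leaving it, as if the graph obtained from
`G` by contracting the complement of `X` were `k`-edge-connected. -/
def CutsAtLeast (k : ℕ) (X : Finset V) : Prop :=
  ∀ K ⊆ X, K.Nonempty → k ≤ cutSize G K

namespace CutsAtLeast

theorem mono (hX : CutsAtLeast G k X) (hYX : Y ⊆ X) : CutsAtLeast G k Y :=
  fun K hK => hX K (hK.trans hYX)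

theorem mono_left {l : ℕ} (hX : CutsAtLeast G k X) (hl : l ≤ k) : CutsAtLeast G l X :=
  fun K hK hne => hl.trans (hX K hK hne)

theorem exists_boundary_notMem (hX : CutsAtLeast G k X) (hne : X.Nonempty) {s : Finset (V × V)}
    (hs : #s < k) : ∃ v o, v ∈ X ∧ o ∉ X ∧ G.Adj v o ∧ (v, o) ∉ s := by
  obtain ⟨⟨v, o⟩, hvo, hns⟩ := exists_mem_notMem_of_card_lt_card (hs.trans_le (hX X subset_rfl hne))
  obtain ⟨hv, ho, hadj⟩ := G.mk_mem_interedges_iff.1 hvo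
  exact ⟨v, o, hv, mem_compl.1 ho, hadj, hns⟩

theorem exists_relativeFlow (hX : CutsAtLeast G 2 X) : ∃ F, IsRelativeFlow G X F := by
  induction X using Finset.strongInduction with
  | H X ih =>
    rcases X.eq_empty_or_nonempty with rfl | hne
    · exact ⟨0, .empty⟩
    obtain ⟨v₁, o₁, hv₁, ho₁, h₁, -⟩ := hX.exists_boundary_notMem hne (s := ∅) (by simp)
    by_cases hconn : (G.induce (X : Set V)).IsEdgeConnected 2
    · obtain ⟨v₃, o₃, hv₃, ho₃, h₃, hne₃⟩ :=
        hX.exists_boundary_notMem hne (s := {(v₁, o₁)}) (by simp)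
      obtain ⟨w, hw, hw₃, hwX⟩ := exists_closed_trail_in hconn hv₁ hv₃
      have hlt : X \ w.support.toFinset ⊂ X :=
        sdiff_ssubset (by simpa [Finset.subset_iff] using hwX) ⟨v₁, by simp⟩
      obtain ⟨F', hF'⟩ := ih _ hlt (hX.mono hlt.1)
      obtain ⟨F, hF, -⟩ := hF'.exists_absorb_closed_trail hw hwX w.start_mem_support ho₁ h₁ hw₃ ho₃
        h₃ (fun h => hne₃ (by simpa using (mk_eq_mk_of_mem_notMem hv₁ ho₃ h).symm)) s(v₁, v₁)
      exact ⟨F, hF⟩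
    · obtain ⟨K, hKX, hv₁K, hcard⟩ := exists_ssubset_card_interedges_le_one hconn hv₁
      have hlt : X \ K ⊂ X := sdiff_ssubset hKX.1 ⟨v₁, hv₁K⟩
      obtain ⟨F₁, hF₁⟩ := ih K hKX (hX.mono hKX.1)
      obtain ⟨F₂, hF₂⟩ := ih (X \ K) hlt (hX.mono hlt.1)
      obtain ⟨F, hF, -⟩ := hF₁.exists_union hF₂ disjoint_sdiff hcard
      exact ⟨F, union_sdiff_of_subset hKX.1 ▸ hF⟩

theorem exists_relativeFlow_ne_interedges {K L : Finset V} (hK : CutsAtLeast G 2 K)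
    (hcard : #(G.interedges K L) ≤ 1) {e : Sym2 V}
    (he : ∀ x ∈ K, ∀ z ∈ L, G.Adj x z → ∃ F, IsRelativeFlow G K F ∧ F e ≠ F s(x, z)) :
    ∃ F, IsRelativeFlow G K F ∧ ∀ x ∈ K, ∀ z ∈ L, G.Adj x z → F e ≠ F s(x, z) := by
  rcases (G.interedges K L).eq_empty_or_nonempty with hempty | ⟨⟨x, z⟩, hxz⟩
  · obtain ⟨F, hF⟩ := hK.exists_relativeFlow
    refine ⟨F, hF, fun x hx z hz hxz => ?_⟩
    exact absurd (G.mk_mem_interedges_iff.2 ⟨hx, hz, hxz⟩) (hempty ▸ notMem_empty _)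
  · obtain ⟨hx, hz, hadj⟩ := G.mk_mem_interedges_iff.1 hxz
    obtain ⟨F, hF, hne⟩ := he x hx z hz hadj
    refine ⟨F, hF, fun x' hx' z' hz' hadj' => ?_⟩
    obtain ⟨rfl, rfl⟩ := Prod.mk_inj.1
      (card_le_one.1 hcard _ (G.mk_mem_interedges_iff.2 ⟨hx', hz', hadj'⟩) _ hxz)
    exact hne

variable {v₁ o₁ v₂ o₂ : V}

theorem exists_relativeFlow_ne_of_isEdgeConnected (hX : CutsAtLeast G 3 X)
    (hconn : (G.induce (X : Set V)).IsEdgeConnected 2) (hv₁ : v₁ ∈ X) (ho₁ : o₁ ∉ X)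
    (h₁ : G.Adj v₁ o₁) (hv₂ : v₂ ∈ X) (ho₂ : o₂ ∉ X) (hne : (v₁, o₁) ≠ (v₂, o₂)) :
    ∃ F, IsRelativeFlow G X F ∧ F s(v₁, o₁) ≠ F s(v₂, o₂) := by
  obtain ⟨v₃, o₃, hv₃, ho₃, h₃, hne₃⟩ := hX.exists_boundary_notMem ⟨v₁, hv₁⟩
    (s := {(v₁, o₁), (v₂, o₂)}) (card_le_two.trans_lt (by norm_num))
  simp only [mem_insert, mem_singleton, not_or] at hne₃
  obtain ⟨w, hw, hw₃, hwX⟩ := exists_closed_trail_in hconn hv₁ hv₃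
  obtain ⟨F', hF'⟩ := ((hX.mono (sdiff_subset (t := w.support.toFinset))).mono_left
    (Nat.le_succ 2)).exists_relativeFlow
  obtain ⟨F, hF, -, -, hF₂⟩ := hF'.exists_absorb_closed_trail hw hwX w.start_mem_support ho₁ h₁
    hw₃ ho₃ h₃ (fun h => hne₃.1 (mk_eq_mk_of_mem_notMem hv₁ ho₃ h).symm) s(v₂, o₂)
  refine ⟨F, hF, hF₂ ?_ ?_ ?_⟩
  · exact fun h => ho₂ (hwX _ (w.snd_mem_support_of_mem_edges h))
  · exact fun h => hne (mk_eq_mk_of_mem_notMem hv₂ ho₁ h).symm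
  · exact fun h => hne₃.2 (mk_eq_mk_of_mem_notMem hv₂ ho₃ h).symm

theorem exists_relativeFlow_ne (hX : CutsAtLeast G 3 X)
    (hv₁ : v₁ ∈ X) (ho₁ : o₁ ∉ X) (h₁ : G.Adj v₁ o₁) (hv₂ : v₂ ∈ X) (ho₂ : o₂ ∉ X)
    (h₂ : G.Adj v₂ o₂) (hne : (v₁, o₁) ≠ (v₂, o₂)) :
    ∃ F, IsRelativeFlow G X F ∧ F s(v₁, o₁) ≠ F s(v₂, o₂) := by
  induction X using Finset.strongInduction generalizing v₂ o₂ with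
  | H X ih =>
    by_cases hconn : (G.induce (X : Set V)).IsEdgeConnected 2
    · exact hX.exists_relativeFlow_ne_of_isEdgeConnected hconn hv₁ ho₁ h₁ hv₂ ho₂ hne
    obtain ⟨K, hKX, hv₁K, hcard⟩ := exists_ssubset_card_interedges_le_one hconn hv₁
    have ho₁K : o₁ ∉ K := fun h => ho₁ (hKX.1 h)
    have ihK {v o : V} := @ih K hKX v o (hX.mono hKX.1) hv₁K ho₁K
    have hX₂ := hX.mono_left (Nat.le_succ 2)
    obtain ⟨F₂, hF₂⟩ := (hX₂.mono (sdiff_subset (t := K))).exists_relativeFlow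
    by_cases hv₂K : v₂ ∈ K
    · obtain ⟨F₁, hF₁, hF₁ne⟩ := ihK hv₂K (fun h => ho₂ (hKX.1 h)) h₂ hne
      obtain ⟨F, hF, heq⟩ := hF₁.exists_union hF₂ disjoint_sdiff hcard
      refine ⟨F, union_sdiff_of_subset hKX.1 ▸ hF, ?_⟩
      rwa [heq v₁ hv₁K, heq v₂ hv₂K]
    · have hv₂' : v₂ ∈ X \ K := mem_sdiff.2 ⟨hv₂, hv₂K⟩
      obtain ⟨F₁, hF₁, hF₁ne⟩ := (hX₂.mono hKX.1).exists_relativeFlow_ne_interedges hcard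
        fun x hx z hz hxz => ihK hx (mem_sdiff.1 hz).2 hxz
          fun h => ho₁ ((Prod.mk_inj.1 h).2 ▸ (mem_sdiff.1 hz).1)
      obtain ⟨F, hF, heq₁, g, hg, heq₂⟩ := hF₁.exists_union_map hF₂ disjoint_sdiff hcard
        (hF₂.snd_ne_zero hv₂' h₂ fun h => ho₂ (mem_sdiff.1 h).1) (y₁ := (F₁ s(v₁, o₁)).2)
        fun x hx z hz hxz h => hF₁ne x hx z hz hxz <| Prod.ext
          ((hF₁.fst_eq_zero v₁ hv₁K o₁ h₁ ho₁K).trans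
            (hF₁.fst_eq_zero x hx z hxz (mem_sdiff.1 hz).2).symm) h
      refine ⟨F, union_sdiff_of_subset hKX.1 ▸ hF, ?_⟩
      rw [heq₁ v₁ hv₁K, heq₂ v₂ hv₂' o₂ h₂]
      exact fun h => hg (congrArg Prod.snd h).symm

end CutsAtLeast

end ExistenceOfFlows

section PassesThrough

variable {V : Type*} {G : SimpleGraph V} {F : Sym2 V → Color}

variable (G) in
/-- The first coordinate of `F`, the indicator of a union of cycles, is nonzero somewhere at `v`. -/
def PassesThrough (F : Sym2 V → Color) (v : V) : Prop :=
  ∃ z, G.Adj v z ∧ (F s(v, z)).1 ≠ 0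

theorem passesThrough_of_mem_support {a b : V} {w : G.Walk a a} (hb : b ∈ w.support) (hab : a ≠ b)
    (hF : ∀ e ∈ w.edges, (F e).1 ≠ 0) {v : V} (hv : v ∈ w.support) : PassesThrough G F v := by
  have hnil : ¬ w.Nil := by
    intro h
    rw [Walk.nil_iff_support_eq.1 h, List.mem_singleton] at hb
    exact hab hb.symm
  obtain ⟨e, he, hve⟩ := (Walk.mem_support_iff_exists_mem_edges_of_not_nil hnil).1 hv
  obtain ⟨z, rfl⟩ := Sym2.mem_iff_exists.1 hve
  exact ⟨z, w.adj_of_mem_edges he, hF _ he⟩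

end PassesThrough

section ThreeCuts

variable {V : Type*} [Fintype V] [DecidableEq V] {G : SimpleGraph V} [DecidableRel G.Adj]
variable {K X : Finset V} {F : Sym2 V → Color}

theorem IsRelativeFlow.ne_of_cutSize_eq_three (hF : IsRelativeFlow G K F) (hK : cutSize G K = 3)
    {p q : V × V} (hp : p ∈ G.interedges K Kᶜ) (hq : q ∈ G.interedges K Kᶜ) (hpq : p ≠ q) :
    F s(p.1, p.2) ≠ F s(q.1, q.2) := by
  intro heq
  obtain ⟨r, hr⟩ : ∃ r, (G.interedges K Kᶜ \ {p, q}) = {r} := by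
    rw [← card_eq_one, card_sdiff_of_subset (by simp [insert_subset_iff, hp, hq]), card_pair hpq]
    exact congrArg (· - 2) hK
  have hrK : r ∈ G.interedges K Kᶜ := (mem_sdiff.1 (hr ▸ mem_singleton_self r)).1
  obtain ⟨hr₁, -, hadj⟩ := G.mem_interedges_iff.1 hrK
  refine hF.ne_zero r.1 hr₁ r.2 hadj ?_
  have hsum := cutSum_eq_zero hF.vertexSum_eq_zero
  rwa [cutSum, ← sum_sdiff (s₁ := {p, q}) (by simp [insert_subset_iff, hp, hq]), hr, sum_singleton,
    sum_pair hpq, heq, ZModModule.add_self, add_zero] at hsum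

theorem CutsAtLeast.isEdgeConnected_of_cutSize_eq_three (hK : CutsAtLeast G 3 K)
    (hcard : cutSize G K = 3) : (G.induce (K : Set V)).IsEdgeConnected 2 := by
  by_contra hconn
  obtain ⟨v, hv⟩ : K.Nonempty := by
    by_contra h
    simp [not_nonempty_iff_eq_empty.1 h, cutSize] at hcard
  obtain ⟨L, hLK, hvL, hle⟩ := exists_ssubset_card_interedges_le_one hconn hv
  have hL := hK L hLK.1 ⟨v, hvL⟩
  have hKL := hK (K \ L) sdiff_subset (sdiff_nonempty.2 hLK.2)
  have hsum := cutSize_add_cutSize (G := G) (disjoint_sdiff (s := L) (t := K))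
  rw [union_sdiff_of_subset hLK.1] at hsum
  omega

theorem CutsAtLeast.exists_relativeFlow_passesThrough (hX : CutsAtLeast G 2 X)
    (hconn : (G.induce (X : Set V)).IsEdgeConnected 2) {s t a b : V} (hs : s ∈ X) (ha : a ∉ X)
    (hsa : G.Adj s a) (ht : t ∈ X) (hb : b ∉ X) (htb : G.Adj t b) (hst : s ≠ t) :
    ∃ F, IsRelativeFlow G X F ∧ PassesThrough G F s ∧ PassesThrough G F t := by
  obtain ⟨w, hw, hwt, hwX⟩ := exists_closed_trail_in hconn hs ht
  obtain ⟨F', hF'⟩ := (hX.mono (sdiff_subset (t := w.support.toFinset))).exists_relativeFlow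
  obtain ⟨F, hF, -, hwF, -⟩ := hF'.exists_absorb_closed_trail hw hwX w.start_mem_support ha hsa
    hwt hb htb (fun h => hst (Prod.mk_inj.1 (mk_eq_mk_of_mem_notMem hs hb h)).1) s(s, s)
  exact ⟨F, hF, passesThrough_of_mem_support hwt hst hwF w.start_mem_support,
    passesThrough_of_mem_support hwt hst hwF hwt⟩

end ThreeCuts

section Boundary

variable {V ι : Type*} [Fintype V] [DecidableEq V] {G : SimpleGraph V}
variable [DecidableRel G.Adj] {Y K : Finset V} {v o : ι → V}

variable (G) in
/-- The family `i ↦ (v i, o i)` lists the edges leaving `Y` without repetition, with `v i` the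
endpoint in `Y`. -/
structure IsBoundary (Y : Finset V) (v o : ι → V) : Prop where
  injective : Function.Injective fun i => (v i, o i)
  mem_interedges_iff : ∀ x y, (x, y) ∈ G.interedges Y Yᶜ ↔ ∃ i, v i = x ∧ o i = y

namespace IsBoundary

theorem mem_interedges (h : IsBoundary G Y v o) (i : ι) : (v i, o i) ∈ G.interedges Y Yᶜ :=
  (h.mem_interedges_iff _ _).2 ⟨i, rfl, rfl⟩

theorem mem (h : IsBoundary G Y v o) (i : ι) : v i ∈ Y :=
  (G.mk_mem_interedges_iff.1 (h.mem_interedges i)).1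

theorem notMem (h : IsBoundary G Y v o) (i : ι) : o i ∉ Y :=
  mem_compl.1 (G.mk_mem_interedges_iff.1 (h.mem_interedges i)).2.1

theorem adj (h : IsBoundary G Y v o) (i : ι) : G.Adj (v i) (o i) :=
  (G.mk_mem_interedges_iff.1 (h.mem_interedges i)).2.2

theorem mem_interedges_of_subset (h : IsBoundary G Y v o) (hK : K ⊆ Y) {i : ι} (hi : v i ∈ K) :
    (v i, o i) ∈ G.interedges K Kᶜ :=
  G.mk_mem_interedges_iff.2 ⟨hi, mem_compl.2 fun ho => h.notMem i (hK ho), h.adj i⟩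

theorem mk_ne_mk (h : IsBoundary G Y v o) {i j : ι} (hij : i ≠ j) :
    s(v i, o i) ≠ s(v j, o j) := fun heq =>
  hij (h.injective (mk_eq_mk_of_mem_notMem (h.mem i) (h.notMem j) heq))

variable [Fintype ι]

theorem card_interedges (h : IsBoundary G Y v o) (hK : K ⊆ Y) :
    #(G.interedges K Yᶜ) = #{i | v i ∈ K} := by
  symm
  refine card_bij (fun i _ => (v i, o i)) (fun i hi => ?_)
    (fun i _ j _ hij => h.injective hij) fun ⟨x, y⟩ hxy => ?_
  · exact G.mk_mem_interedges_iff.2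
      ⟨(mem_filter.1 hi).2, mem_compl.2 (h.notMem i), h.adj i⟩
  · obtain ⟨hx, hy, hadj⟩ := G.mk_mem_interedges_iff.1 hxy
    obtain ⟨i, rfl, rfl⟩ := (h.mem_interedges_iff x y).1
      (G.mk_mem_interedges_iff.2 ⟨hK hx, hy, hadj⟩)
    exact ⟨i, mem_filter.2 ⟨mem_univ i, hx⟩, rfl⟩

theorem cutSize_eq (h : IsBoundary G Y v o) : cutSize G Y = Fintype.card ι := by
  rw [cutSize, h.card_interedges subset_rfl, filter_true_of_mem fun i _ => h.mem i, card_univ]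

theorem cutSum_eq {M : Type*} [AddCommMonoid M] (h : IsBoundary G Y v o) (f : Sym2 V → M) :
    cutSum G f Y = ∑ i, f s(v i, o i) := by
  symm
  refine sum_bij (fun i _ => (v i, o i)) (fun i _ => h.mem_interedges i)
    (fun i _ j _ hij => h.injective hij) (fun ⟨x, y⟩ hxy => ?_) fun _ _ => rfl
  obtain ⟨i, rfl, rfl⟩ := (h.mem_interedges_iff x y).1 hxy
  exact ⟨i, mem_univ i, rfl⟩

end IsBoundary

end Boundary

section FourCuts

variable {V : Type*} [Fintype V] [DecidableEq V] {G : SimpleGraph V} [DecidableRel G.Adj]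
variable {Y K : Finset V} {v o : Fin 4 → V}

namespace IsBoundary

theorem ne_of_ne {F : Sym2 V → Color} (h : IsBoundary G Y v o) (hF : IsRelativeFlow G Y F)
    {j k : Fin 4} (hj : j ≠ 0 ∧ j ≠ 1) (hk : k ≠ 0 ∧ k ≠ 1 ∧ k ≠ j)
    (hjk : F s(v j, o j) ≠ F s(v k, o k)) : F s(v 0, o 0) ≠ F s(v 1, o 1) := by
  intro heq
  have huniv : (univ : Finset (Fin 4)) = {0, 1, j, k} := by
    clear hjk heq
    decide +revert
  have hsum := h.cutSum_eq F
  rw [cutSum_eq_zero hF.vertexSum_eq_zero, huniv, sum_insert (by grind), sum_insert (by grind),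
    sum_pair hk.2.2.symm, heq, ← add_assoc, ZModModule.add_self, zero_add, eq_comm,
    ← ZModModule.sub_eq_add, sub_eq_zero] at hsum
  exact hjk hsum

theorem exists_split (h : IsBoundary G Y v o) (hY : CutsAtLeast G 3 Y)
    (hconn : ¬ (G.induce (Y : Set V)).IsEdgeConnected 2) :
    ∃ K ⊂ Y, #(G.interedges K (Y \ K)) ≤ 1 ∧ cutSize G K = 3 ∧ cutSize G (Y \ K) = 3 ∧
      ∃ j ≠ 0, ∀ i, v i ∈ K ↔ i = 0 ∨ i = j := by
  obtain ⟨K, hKY, h₀, hle⟩ := exists_ssubset_card_interedges_le_one hconn (h.mem 0)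
  have hK := hY K hKY.1 ⟨_, h₀⟩
  have hYK := hY (Y \ K) sdiff_subset (sdiff_nonempty.2 hKY.2)
  have hsum := cutSize_add_cutSize (G := G) (disjoint_sdiff (s := K) (t := Y))
  have hKcut := cutSize_of_subset (G := G) hKY.1
  rw [union_sdiff_of_subset hKY.1, h.cutSize_eq, Fintype.card_fin] at hsum
  rw [h.card_interedges hKY.1] at hKcut
  refine ⟨K, hKY, hle, by omega, by omega, ?_⟩
  have hcard : #(({i | v i ∈ K} : Finset (Fin 4)).erase 0) = 1 := by
    rw [card_erase_of_mem (by simpa using h₀)]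
    omega
  obtain ⟨j, hj⟩ := card_eq_one.1 hcard
  have hmem (i : Fin 4) : (i ≠ 0 ∧ v i ∈ K) ↔ i = j := by simpa using Finset.ext_iff.1 hj i
  exact ⟨j, ((hmem j).2 rfl).1, fun i => by grind⟩

end IsBoundary

namespace CutsAtLeast

theorem exists_relativeFlow_passesThrough_of_cutSize_eq_three (hY : CutsAtLeast G 3 Y)
    (h : IsBoundary G Y v o) (hv : Function.Injective v) (hK : K ⊆ Y)
    (hcard : cutSize G K = 3) {i j : Fin 4} (hi : v i ∈ K) (hj : v j ∈ K) (hij : i ≠ j) :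
    ∃ F, IsRelativeFlow G K F ∧ PassesThrough G F (v i) ∧ PassesThrough G F (v j) :=
  ((hY.mono hK).mono_left (Nat.le_succ 2)).exists_relativeFlow_passesThrough
    ((hY.mono hK).isEdgeConnected_of_cutSize_eq_three hcard) hi (fun ho => h.notMem i (hK ho))
    (h.adj i) hj (fun ho => h.notMem j (hK ho)) (h.adj j) (hv.ne hij)

theorem exists_relativeFlow_four_of_same_side (hY : CutsAtLeast G 3 Y)
    (h : IsBoundary G Y v o) (hv : Function.Injective v)
    (hKY : K ⊆ Y) (hle : #(G.interedges K (Y \ K)) ≤ 1) (hK : cutSize G K = 3)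
    (h₀ : v 0 ∈ K) (h₁ : v 1 ∈ K) :
    ∃ F, IsRelativeFlow G Y F ∧ F s(v 0, o 0) ≠ F s(v 1, o 1) ∧
      PassesThrough G F (v 0) ∧ PassesThrough G F (v 1) := by
  obtain ⟨F₁, hF₁, pass₀, pass₁⟩ :=
    hY.exists_relativeFlow_passesThrough_of_cutSize_eq_three h hv hKY hK h₀ h₁ zero_ne_one
  obtain ⟨F₂, hF₂⟩ := ((hY.mono (sdiff_subset (t := K))).mono_left
    (Nat.le_succ 2)).exists_relativeFlow
  obtain ⟨F, hF, heq⟩ := hF₁.exists_union hF₂ disjoint_sdiff hle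
  refine ⟨F, union_sdiff_of_subset hKY ▸ hF, ?_, ?_, ?_⟩
  · rw [heq _ h₀, heq _ h₁]
    exact hF₁.ne_of_cutSize_eq_three hK (h.mem_interedges_of_subset hKY h₀)
      (h.mem_interedges_of_subset hKY h₁) (h.injective.ne zero_ne_one)
  · exact pass₀.imp fun z hz => heq _ h₀ z ▸ hz
  · exact pass₁.imp fun z hz => heq _ h₁ z ▸ hz

theorem exists_relativeFlow_four_of_opposite_sides (hY : CutsAtLeast G 3 Y)
    (h : IsBoundary G Y v o) (hv : Function.Injective v) (hKY : K ⊆ Y)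
    (hle : #(G.interedges K (Y \ K)) ≤ 1) (hK : cutSize G K = 3)
    (hYK : cutSize G (Y \ K) = 3) {j k : Fin 4} (h₀ : v 0 ∈ K) (hj : v j ∈ K)
    (hj₀ : j ≠ 0) (h₁ : v 1 ∈ Y \ K) (hk : v k ∈ Y \ K) (hk₁ : k ≠ 1) :
    ∃ F, IsRelativeFlow G Y F ∧ F s(v 0, o 0) ≠ F s(v 1, o 1) ∧
      PassesThrough G F (v 0) ∧ PassesThrough G F (v 1) := by
  obtain ⟨F₁, hF₁, pass₀, -⟩ :=
    hY.exists_relativeFlow_passesThrough_of_cutSize_eq_three h hv hKY hK h₀ hj hj₀.symm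
  obtain ⟨F₂, hF₂, pass₁, -⟩ :=
    hY.exists_relativeFlow_passesThrough_of_cutSize_eq_three h hv sdiff_subset hYK h₁ hk hk₁.symm
  have hne (x) (hx : x ∈ K) (z) (hz : z ∈ Y \ K) (hxz : G.Adj x z) :
      (F₁ s(v 0, o 0)).2 ≠ (F₁ s(x, z)).2 := by
    intro heq
    refine hF₁.ne_of_cutSize_eq_three hK (h.mem_interedges_of_subset hKY h₀)
      (G.mk_mem_interedges_iff.2 ⟨hx, mem_compl.2 (mem_sdiff.1 hz).2, hxz⟩) ?_ (Prod.ext ?_ heq)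
    · exact fun h' => h.notMem 0 ((Prod.mk_inj.1 h').2 ▸ (mem_sdiff.1 hz).1)
    · exact (hF₁.fst_eq_zero _ h₀ _ (h.adj 0) fun ho => h.notMem 0 (hKY ho)).trans
        (hF₁.fst_eq_zero x hx z hxz (mem_sdiff.1 hz).2).symm
  obtain ⟨F, hF, heq₁, g, hg, heq₂⟩ := hF₁.exists_union_map hF₂ disjoint_sdiff hle
    (hF₂.snd_ne_zero h₁ (h.adj 1) fun ho => h.notMem 1 (mem_sdiff.1 ho).1) hne
  refine ⟨F, union_sdiff_of_subset hKY ▸ hF, ?_, ?_, ?_⟩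
  · rw [heq₁ _ h₀, heq₂ _ h₁ _ (h.adj 1)]
    exact fun h' => hg (congrArg Prod.snd h').symm
  · exact pass₀.imp fun z hz => heq₁ _ h₀ z ▸ hz
  · exact pass₁.imp fun z ⟨hz, hne⟩ => ⟨hz, heq₂ _ h₁ _ hz ▸ hne⟩

theorem exists_relativeFlow_four_of_not_isEdgeConnected (hY : CutsAtLeast G 3 Y)
    (h : IsBoundary G Y v o) (hv : Function.Injective v)
    (hconn : ¬ (G.induce (Y : Set V)).IsEdgeConnected 2) :
    ∃ F, IsRelativeFlow G Y F ∧ F s(v 0, o 0) ≠ F s(v 1, o 1) ∧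
      PassesThrough G F (v 0) ∧ PassesThrough G F (v 1) := by
  obtain ⟨K, hKY, hle, hK, hYK, j, hj₀, hj⟩ := h.exists_split hY hconn
  have h₀ : v 0 ∈ K := (hj 0).2 (.inl rfl)
  have hjK : v j ∈ K := (hj j).2 (.inr rfl)
  rcases eq_or_ne j 1 with rfl | hj₁
  · exact hY.exists_relativeFlow_four_of_same_side h hv hKY.1 hle hK h₀ hjK
  · obtain ⟨k, hk₀, hk₁, hkj⟩ := (by decide : ∀ j : Fin 4, ∃ k, k ≠ 0 ∧ k ≠ 1 ∧ k ≠ j) j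
    have mem_sdiff_K {i : Fin 4} (hi₀ : i ≠ 0) (hij : i ≠ j) : v i ∈ Y \ K :=
      mem_sdiff.2 ⟨h.mem i, fun hi => ((hj i).1 hi).elim hi₀ hij⟩
    exact hY.exists_relativeFlow_four_of_opposite_sides h hv hKY.1 hle hK hYK h₀ hjK hj₀
      (mem_sdiff_K one_ne_zero hj₁.symm) (mem_sdiff_K hk₀ hkj) hk₁

theorem exists_relativeFlow_four_of_isEdgeConnected (hY : CutsAtLeast G 3 Y)
    (h : IsBoundary G Y v o) (hv : Function.Injective v)
    (hconn : (G.induce (Y : Set V)).IsEdgeConnected 2) :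
    ∃ F, IsRelativeFlow G Y F ∧ F s(v 0, o 0) ≠ F s(v 1, o 1) ∧
      PassesThrough G F (v 0) ∧ PassesThrough G F (v 1) := by
  obtain ⟨w, hw, hw₁, hwY⟩ := exists_closed_trail_in hconn (h.mem 0) (h.mem 1)
  have pass {F : Sym2 V → Color} (hF : ∀ e ∈ w.edges, (F e).1 ≠ 0) :
      PassesThrough G F (v 0) ∧ PassesThrough G F (v 1) :=
    have hne := hv.ne zero_ne_one
    ⟨passesThrough_of_mem_support hw₁ hne hF w.start_mem_support,
      passesThrough_of_mem_support hw₁ hne hF hw₁⟩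
  have hYw := hY.mono (sdiff_subset (t := w.support.toFinset))
  by_cases hex : ∃ j, j ≠ 0 ∧ j ≠ 1 ∧ v j ∈ w.support
  · obtain ⟨j, hj₀, hj₁, hjw⟩ := hex
    obtain ⟨k, hk₀, hk₁, hkj⟩ := (by decide : ∀ j : Fin 4, ∃ k, k ≠ 0 ∧ k ≠ 1 ∧ k ≠ j) j
    obtain ⟨F', hF'⟩ := (hYw.mono_left (Nat.le_succ 2)).exists_relativeFlow
    obtain ⟨F, hF, -, hFw, hFjk⟩ := hF'.exists_absorb_closed_trail hw hwY hjw (h.notMem j) (h.adj j)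
      w.start_mem_support (h.notMem 0) (h.adj 0) (h.mk_ne_mk hj₀) s(v k, o k)
    refine ⟨F, hF, h.ne_of_ne hF ⟨hj₀, hj₁⟩ ⟨hk₀, hk₁, hkj⟩ (hFjk ?_ (h.mk_ne_mk hkj)
      (h.mk_ne_mk hk₀)), pass hFw⟩
    exact fun he => h.notMem k (hwY _ (w.snd_mem_support_of_mem_edges he))
  · push Not at hex
    have mem {j : Fin 4} (hj₀ : j ≠ 0) (hj₁ : j ≠ 1) : v j ∈ Y \ w.support.toFinset :=
      mem_sdiff.2 ⟨h.mem j, fun hj => hex j hj₀ hj₁ (List.mem_toFinset.1 hj)⟩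
    have h₂ := mem (j := 2) (by decide) (by decide)
    have h₃ := mem (j := 3) (by decide) (by decide)
    have notMem (j : Fin 4) : o j ∉ Y \ w.support.toFinset := fun ho =>
      h.notMem j (mem_sdiff.1 ho).1
    obtain ⟨F', hF', hne⟩ := hYw.exists_relativeFlow_ne h₂ (notMem 2) (h.adj 2) h₃ (notMem 3)
      (h.adj 3) (h.injective.ne (by decide : (2 : Fin 4) ≠ 3))
    obtain ⟨F, hF, heq, hFw, -⟩ := hF'.exists_absorb_closed_trail hw hwY w.start_mem_support
      (h.notMem 0) (h.adj 0) hw₁ (h.notMem 1) (h.adj 1) (h.mk_ne_mk zero_ne_one) s(v 0, v 0)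
    refine ⟨F, hF, h.ne_of_ne (j := 2) (k := 3) hF (by decide) (by decide) ?_, pass hFw⟩
    rwa [heq _ h₂, heq _ h₃]

theorem exists_relativeFlow_four (hY : CutsAtLeast G 3 Y) (h : IsBoundary G Y v o)
    (hv : Function.Injective v) :
    ∃ F, IsRelativeFlow G Y F ∧ F s(v 0, o 0) ≠ F s(v 1, o 1) ∧
      PassesThrough G F (v 0) ∧ PassesThrough G F (v 1) := by
  by_cases hconn : (G.induce (Y : Set V)).IsEdgeConnected 2
  · exact hY.exists_relativeFlow_four_of_isEdgeConnected h hv hconn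
  · exact hY.exists_relativeFlow_four_of_not_isEdgeConnected h hv hconn

end CutsAtLeast

end FourCuts

section EqOrDisjoint

variable {α β : Type*} {S T : Finset α}

/-- Two sets are equal or disjoint. For the two pairs of colors next to an edge this expresses that
the edge is poor or rich. -/
abbrev EqOrDisjoint (S T : Finset α) : Prop := S = T ∨ Disjoint S T

theorem EqOrDisjoint.symm (h : EqOrDisjoint S T) : EqOrDisjoint T S :=
  h.imp Eq.symm fun h => h.symm

theorem EqOrDisjoint.image [DecidableEq β] (h : EqOrDisjoint S T) {φ : α → β}
    (hφ : Function.Injective φ) : EqOrDisjoint (S.image φ) (T.image φ) :=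
  h.imp (congrArg _) (disjoint_image hφ).2

theorem EqOrDisjoint.card_union [DecidableEq α] {x : α} (hS : #S = 3) (hT : #T = 3)
    (hxS : x ∈ S) (hxT : x ∈ T) (h : EqOrDisjoint (S.erase x) (T.erase x)) :
    #(S ∪ T) = 3 ∨ #(S ∪ T) = 5 := by
  rcases h with heq | hdisj
  · left
    rw [← insert_erase hxS, heq, insert_erase hxT, union_self, hT]
  · right
    have hunion : S ∪ T = insert x (S.erase x ∪ T.erase x) := by
      rw [insert_union_distrib, insert_erase hxS, insert_erase hxT]
    rw [hunion, card_insert_of_notMem (by simp), card_union_of_disjoint hdisj,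
      card_erase_of_mem hxS, card_erase_of_mem hxT, hS, hT]

end EqOrDisjoint

theorem exists_perm_map_eq {α : Type*} [Finite α] {l l' : List α} (hl : l.Nodup) (hl' : l'.Nodup)
    (hlen : l.length = l'.length) : ∃ σ : Equiv.Perm α, l.map σ = l' := by
  obtain ⟨σ, hσ⟩ := (Equiv.Perm.isMultiplyPretransitive α l.length).exists_smul_eq
    ⟨l.get, List.nodup_iff_injective_get.1 hl⟩ ⟨fun i => l'.get (i.cast hlen),
      (List.nodup_iff_injective_get.1 hl').comp (Fin.cast_injective _)⟩
  refine ⟨σ, List.ext_getElem (by simpa using hlen) fun i hi hi' => ?_⟩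
  simpa using DFunLike.congr_fun hσ ⟨i, by simpa using hi⟩

section NeighborTriples

variable {V : Type*} {G : SimpleGraph V} {v a b d : V}

variable (G) in
/-- The neighbors of `v` are the three distinct vertices `a`, `b`, `d`. -/
structure IsNeighborTriple (v a b d : V) : Prop where
  ne₁₂ : a ≠ b
  ne₁₃ : a ≠ d
  ne₂₃ : b ≠ d
  adj_iff : ∀ w, G.Adj v w ↔ w = a ∨ w = b ∨ w = d

namespace IsNeighborTriple

theorem adj₁ (h : IsNeighborTriple G v a b d) : G.Adj v a := (h.adj_iff a).2 (.inl rfl)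

theorem adj₂ (h : IsNeighborTriple G v a b d) : G.Adj v b := (h.adj_iff b).2 (.inr (.inl rfl))

theorem adj₃ (h : IsNeighborTriple G v a b d) : G.Adj v d := (h.adj_iff d).2 (.inr (.inr rfl))

theorem rotate (h : IsNeighborTriple G v a b d) : IsNeighborTriple G v b d a :=
  ⟨h.ne₂₃, h.ne₁₂.symm, h.ne₁₃.symm, fun w => by rw [h.adj_iff]; tauto⟩

theorem swap (h : IsNeighborTriple G v a b d) : IsNeighborTriple G v a d b :=
  ⟨h.ne₁₃, h.ne₁₂, h.ne₂₃.symm, fun w => by rw [h.adj_iff]; tauto⟩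

variable [Fintype V] [DecidableRel G.Adj]

theorem vertexSum_eq {M : Type*} [AddCommMonoid M] (h : IsNeighborTriple G v a b d)
    (f : Sym2 V → M) : vertexSum G f v = f s(v, a) + f s(v, b) + f s(v, d) := by
  classical
  have hN : G.neighborFinset v = {a, b, d} := by ext w; simp [h.adj_iff]
  rw [vertexSum, hN, sum_insert (by simp [h.ne₁₂, h.ne₁₃]), sum_pair h.ne₂₃, add_assoc]

end IsNeighborTriple

namespace IsCubic

theorem exists_isNeighborTriple (hG : IsCubic G) (v : V) : ∃ a b d, IsNeighborTriple G v a b d := by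
  obtain ⟨a, b, d, hab, had, hbd, hN⟩ := Set.ncard_eq_three.1 (hG v)
  exact ⟨a, b, d, hab, had, hbd, fun w => by rw [← mem_neighborSet, hN]; simp⟩

theorem exists_isNeighborTriple_of_adj (hG : IsCubic G) (h : G.Adj v a) :
    ∃ b d, IsNeighborTriple G v a b d := by
  obtain ⟨x, y, z, hv⟩ := hG.exists_isNeighborTriple v
  rcases (hv.adj_iff a).1 h with rfl | rfl | rfl
  · exact ⟨_, _, hv⟩
  · exact ⟨_, _, hv.rotate⟩
  · exact ⟨_, _, hv.rotate.rotate⟩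

theorem exists_isNeighborTriple_of_adj_of_adj (hG : IsCubic G) (ha : G.Adj v a) (hb : G.Adj v b)
    (hab : a ≠ b) : ∃ d, IsNeighborTriple G v a b d := by
  obtain ⟨x, y, hv⟩ := hG.exists_isNeighborTriple_of_adj ha
  rcases (hv.adj_iff b).1 hb with rfl | rfl | rfl
  · exact absurd rfl hab
  · exact ⟨_, hv⟩
  · exact ⟨_, hv.swap⟩

end IsCubic

end NeighborTriples

section NormalColorings

variable {V C : Type*} [Fintype V] [DecidableEq C] {G : SimpleGraph V} [DecidableRel G.Adj]
variable {c c' : Sym2 V → C} {v w : V}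

variable (G) in
/-- The finite form of `colorSet`. -/
def colorsAt (c : Sym2 V → C) (v : V) : Finset C :=
  (G.neighborFinset v).image fun w => c s(v, w)

variable (G) in
/-- The colors at `v` other than the color of the edge from `v` to `w`. -/
def otherColors (c : Sym2 V → C) (v w : V) : Finset C :=
  (colorsAt G c v).erase (c s(v, w))

theorem mem_colorsAt (h : G.Adj v w) : c s(v, w) ∈ colorsAt G c v :=
  mem_image_of_mem _ ((G.mem_neighborFinset v w).2 h)

theorem colorsAt_congr (h : ∀ w, G.Adj v w → c s(v, w) = c' s(v, w)) :
    colorsAt G c v = colorsAt G c' v :=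
  image_congr fun w hw => h w ((G.mem_neighborFinset v w).1 hw)

theorem otherColors_congr (h : ∀ w, G.Adj v w → c s(v, w) = c' s(v, w)) (hvw : G.Adj v w) :
    otherColors G c v w = otherColors G c' v w := by
  rw [otherColors, otherColors, colorsAt_congr h, h w hvw]

theorem colorsAt_comp {D : Type*} [DecidableEq D] (φ : C → D) (c : Sym2 V → C) (v : V) :
    colorsAt G (fun e => φ (c e)) v = (colorsAt G c v).image φ := by
  simp only [colorsAt, image_image, Function.comp_def]

theorem otherColors_comp {D : Type*} [DecidableEq D] {φ : C → D} (hφ : Function.Injective φ)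
    (c : Sym2 V → C) (v w : V) :
    otherColors G (fun e => φ (c e)) v w = (otherColors G c v w).image φ := by
  rw [otherColors, colorsAt_comp, otherColors, image_erase hφ]

namespace IsNeighborTriple

variable {a b d : V}

theorem colorsAt_eq (h : IsNeighborTriple G v a b d) (c : Sym2 V → C) :
    colorsAt G c v = {c s(v, a), c s(v, b), c s(v, d)} := by
  classical
  have hN : G.neighborFinset v = {a, b, d} := by ext w; simp [h.adj_iff]
  simp only [colorsAt, hN, image_insert, image_singleton]

theorem otherColors_eq (h : IsNeighborTriple G v a b d)
    (hab : c s(v, a) ≠ c s(v, b)) (had : c s(v, a) ≠ c s(v, d)) :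
    otherColors G c v a = {c s(v, b), c s(v, d)} := by
  rw [otherColors, h.colorsAt_eq, erase_insert (by simp [hab, had])]

end IsNeighborTriple

variable [Zero C]

variable (G) in
/-- Around the vertices of `X`, the map `c` is a normal edge-coloring by nonzero colors; edges
leaving `X` are only required to fit into three distinct colors at their endpoint in `X`. -/
structure IsNormalOn (X : Finset V) (c : Sym2 V → C) : Prop where
  zero_notMem : ∀ v ∈ X, 0 ∉ colorsAt G c v
  card_colorsAt : ∀ v ∈ X, #(colorsAt G c v) = 3
  eqOrDisjoint : ∀ v ∈ X, ∀ w ∈ X, G.Adj v w →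
    EqOrDisjoint (otherColors G c v w) (otherColors G c w v)

namespace IsNormalOn

variable {X A B : Finset V} {c₁ c₂ : Sym2 V → C} {a b d : V}

theorem empty : IsNormalOn G ∅ c :=
  ⟨by simp, by simp, by simp⟩

theorem nodup (h : IsNormalOn G X c) (hv : v ∈ X) (hN : IsNeighborTriple G v a b d) :
    [0, c s(v, a), c s(v, b), c s(v, d)].Nodup := by
  have hzero := h.zero_notMem v hv
  have hcard := h.card_colorsAt v hv
  rw [hN.colorsAt_eq] at hzero hcard
  rw [← Multiset.coe_nodup, ← Multiset.toFinset_card_eq_card_iff_nodup]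
  simpa [hcard] using card_insert_of_notMem hzero

theorem otherColors_eq (h : IsNormalOn G X c) (hv : v ∈ X) (hN : IsNeighborTriple G v a b d) :
    otherColors G c v a = {c s(v, b), c s(v, d)} := by
  have hnodup := h.nodup hv hN
  simp only [List.nodup_cons, List.mem_cons, not_or] at hnodup
  exact hN.otherColors_eq hnodup.2.1.1 hnodup.2.1.2.1

theorem comp_perm (h : IsNormalOn G X c) (σ : Equiv.Perm C) (hσ : σ 0 = 0) :
    IsNormalOn G X (fun e => σ (c e)) where
  zero_notMem v hv := by
    rw [colorsAt_comp, mem_image]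
    rintro ⟨x, hx, hx₀⟩
    exact h.zero_notMem v hv (σ.injective (hx₀.trans hσ.symm) ▸ hx)
  card_colorsAt v hv := by
    rw [colorsAt_comp, card_image_of_injective _ σ.injective, h.card_colorsAt v hv]
  eqOrDisjoint v hv w hw hvw := by
    rw [otherColors_comp σ.injective, otherColors_comp σ.injective]
    exact (h.eqOrDisjoint v hv w hw hvw).image σ.injective

variable [DecidableEq V]

theorem union (h₁ : IsNormalOn G A c₁) (h₂ : IsNormalOn G B c₂) (hd : Disjoint A B)
    (hagree : ∀ x ∈ A, ∀ y ∈ B, G.Adj x y → c₁ s(x, y) = c₂ s(y, x))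
    (hother : ∀ x ∈ A, ∀ y ∈ B, G.Adj x y →
      EqOrDisjoint (otherColors G c₁ x y) (otherColors G c₂ y x)) :
    IsNormalOn G (A ∪ B) (glue A c₁ c₂) := by
  have eq₁ (x) (hx : x ∈ A) (y) (_ : G.Adj x y) : glue A c₁ c₂ s(x, y) = c₁ s(x, y) :=
    glue_of_mem hx
  have eq₂ (x) (hx : x ∈ B) (y) (hxy : G.Adj x y) : glue A c₁ c₂ s(x, y) = c₂ s(x, y) :=
    glue_of_notMem_left (disjoint_right.1 hd hx) fun hy => by
      rw [← hagree y hy x hx hxy.symm, Sym2.eq_swap]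
  refine ⟨fun v hv => ?_, fun v hv => ?_, fun v hv w hw hvw => ?_⟩
  · rcases mem_union.1 hv with hv | hv
    · exact colorsAt_congr (eq₁ v hv) ▸ h₁.zero_notMem v hv
    · exact colorsAt_congr (eq₂ v hv) ▸ h₂.zero_notMem v hv
  · rcases mem_union.1 hv with hv | hv
    · exact colorsAt_congr (eq₁ v hv) ▸ h₁.card_colorsAt v hv
    · exact colorsAt_congr (eq₂ v hv) ▸ h₂.card_colorsAt v hv
  · rcases mem_union.1 hv with hv | hv <;> rcases mem_union.1 hw with hw | hw
    · rw [otherColors_congr (eq₁ v hv) hvw, otherColors_congr (eq₁ w hw) hvw.symm]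
      exact h₁.eqOrDisjoint v hv w hw hvw
    · rw [otherColors_congr (eq₁ v hv) hvw, otherColors_congr (eq₂ w hw) hvw.symm]
      exact hother v hv w hw hvw
    · rw [otherColors_congr (eq₂ v hv) hvw, otherColors_congr (eq₁ w hw) hvw.symm]
      exact (hother w hw v hv hvw.symm).symm
    · rw [otherColors_congr (eq₂ v hv) hvw, otherColors_congr (eq₂ w hw) hvw.symm]
      exact h₂.eqOrDisjoint v hv w hw hvw

theorem insert_vertex (h : IsNormalOn G A c) (hN : IsNeighborTriple G v a b d)
    (hnodup : [0, c s(v, a), c s(v, b), c s(v, d)].Nodup)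
    (hother : ∀ x ∈ A, G.Adj v x → EqOrDisjoint (otherColors G c v x) (otherColors G c x v)) :
    IsNormalOn G (insert v A) c := by
  obtain ⟨hzero, htail⟩ := List.nodup_cons.1 hnodup
  refine ⟨forall_mem_insert _ _ _ |>.2 ⟨?_, h.zero_notMem⟩,
    forall_mem_insert _ _ _ |>.2 ⟨?_, h.card_colorsAt⟩, fun x hx y hy hxy => ?_⟩
  · simpa [hN.colorsAt_eq] using hzero
  · simpa [hN.colorsAt_eq] using List.toFinset_card_of_nodup htail
  · rcases mem_insert.1 hx with rfl | hxA <;> rcases mem_insert.1 hy with rfl | hyA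
    · exact absurd hxy G.irrefl
    · exact hother y hyA hxy
    · exact (hother x hxA hxy.symm).symm
    · exact h.eqOrDisjoint x hxA y hyA hxy

theorem exists_union [Finite C] (hG : IsCubic G) (h₁ : IsNormalOn G A c₁) (h₂ : IsNormalOn G B c₂)
    (hd : Disjoint A B) (hle : #(G.interedges A B) ≤ 1) :
    ∃ c : Sym2 V → C, IsNormalOn G (A ∪ B) c := by
  rcases (G.interedges A B).eq_empty_or_nonempty with hempty | ⟨⟨x, y⟩, hxy⟩
  · have not_adj (x) (hx : x ∈ A) (y) (hy : y ∈ B) : ¬ G.Adj x y := fun hxy =>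
      absurd (G.mk_mem_interedges_iff.2 ⟨hx, hy, hxy⟩) (hempty ▸ notMem_empty _)
    exact ⟨_, h₁.union h₂ hd (fun x hx y hy hxy => absurd hxy (not_adj x hx y hy))
      fun x hx y hy hxy => absurd hxy (not_adj x hx y hy)⟩
  · obtain ⟨hx, hy, hadj⟩ := G.mk_mem_interedges_iff.1 hxy
    obtain ⟨a, b, hNx⟩ := hG.exists_isNeighborTriple_of_adj hadj
    obtain ⟨d, e, hNy⟩ := hG.exists_isNeighborTriple_of_adj hadj.symm
    obtain ⟨σ, hσ⟩ := exists_perm_map_eq (h₂.nodup hy hNy) (h₁.nodup hx hNx) rfl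
    simp only [List.map_cons, List.map_nil, List.cons.injEq, and_true] at hσ
    obtain ⟨hσ₀, hσxy, hσd, hσe⟩ := hσ
    have unique (x') (hx' : x' ∈ A) (y') (hy' : y' ∈ B) (hadj' : G.Adj x' y') :
        (x, y) = (x', y') :=
      card_le_one.1 hle _ hxy _ (G.mk_mem_interedges_iff.2 ⟨hx', hy', hadj'⟩)
    refine ⟨_, h₁.union (h₂.comp_perm σ hσ₀) hd (fun x' hx' y' hy' hadj' => ?_)
      fun x' hx' y' hy' hadj' => ?_⟩
    · obtain ⟨rfl, rfl⟩ := Prod.mk_inj.1 (unique x' hx' y' hy' hadj')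
      exact hσxy.symm
    · obtain ⟨rfl, rfl⟩ := Prod.mk_inj.1 (unique x' hx' y' hy' hadj')
      left
      rw [otherColors_comp σ.injective, h₁.otherColors_eq hx hNx, h₂.otherColors_eq hy hNy,
        image_insert, image_singleton, hσd, hσe]

end IsNormalOn

end NormalColorings

section FlowColorings

variable {V M : Type*} [Fintype V] [AddCommGroup M] [Module (ZMod 2) M]
variable {G : SimpleGraph V} [DecidableRel G.Adj] {A : Finset V} {F : Sym2 V → M} {v a b d : V}

theorem eqOrDisjoint_pair_add [DecidableEq M] (x y z : M) :
    EqOrDisjoint {x, x + z} {y, y + z} := by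
  have hz : z + z = 0 := ZModModule.add_self z
  by_cases h : y = x ∨ y = x + z
  · left
    rcases h with rfl | rfl
    · rfl
    · rw [add_assoc, hz, add_zero, pair_comm]
  · right
    have hx : x ≠ y + z := fun hx => h (.inr (by rw [hx, add_assoc, hz, add_zero]))
    push Not at h
    simp only [disjoint_insert_left, disjoint_singleton_left, mem_insert, mem_singleton,
      add_left_inj, not_or]
    exact ⟨⟨h.1.symm, hx⟩, h.2.symm, h.1.symm⟩

namespace IsFlowOn

theorem eq_add (hF : IsFlowOn G A F) (hv : v ∈ A) (hN : IsNeighborTriple G v a b d) :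
    F s(v, d) = F s(v, a) + F s(v, b) := by
  have hsum := hF.vertexSum_eq_zero v hv
  rwa [hN.vertexSum_eq, ← ZModModule.sub_eq_add, sub_eq_zero, eq_comm] at hsum

theorem ne (hF : IsFlowOn G A F) (hv : v ∈ A) (hN : IsNeighborTriple G v a b d) :
    F s(v, a) ≠ F s(v, b) := fun heq =>
  hF.ne_zero v hv d hN.adj₃ (by rw [hF.eq_add hv hN, heq, ZModModule.add_self])

theorem nodup (hF : IsFlowOn G A F) (hv : v ∈ A) (hN : IsNeighborTriple G v a b d) :
    [0, F s(v, a), F s(v, b), F s(v, d)].Nodup := by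
  simp [hF.ne hv hN, hF.ne hv hN.rotate, hF.ne hv hN.swap, (hF.ne_zero v hv _ hN.adj₁).symm,
    (hF.ne_zero v hv _ hN.adj₂).symm, (hF.ne_zero v hv _ hN.adj₃).symm]

theorem otherColors_eq [DecidableEq M] (hF : IsFlowOn G A F) (hv : v ∈ A)
    (hN : IsNeighborTriple G v a b d) :
    otherColors G F v a = {F s(v, b), F s(v, b) + F s(v, a)} := by
  rw [hN.otherColors_eq (hF.ne hv hN) (hF.ne hv hN.swap), hF.eq_add hv hN, add_comm (F s(v, a))]

theorem isNormalOn [DecidableEq M] (hF : IsFlowOn G A F) (hG : IsCubic G) :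
    IsNormalOn G A F := by
  classical
  induction A using Finset.induction_on with
  | empty => exact .empty
  | insert v A _ ih =>
    have hA := ih ⟨fun u hu => hF.vertexSum_eq_zero u (mem_insert_of_mem hu),
      fun u hu => hF.ne_zero u (mem_insert_of_mem hu)⟩
    have hv := mem_insert_self v A
    obtain ⟨a, b, d, hN⟩ := hG.exists_isNeighborTriple v
    refine hA.insert_vertex hN (hF.nodup hv hN) fun x hx hvx => ?_
    obtain ⟨_, _, hNv⟩ := hG.exists_isNeighborTriple_of_adj hvx
    obtain ⟨_, _, hNx⟩ := hG.exists_isNeighborTriple_of_adj hvx.symm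
    rw [hF.otherColors_eq hv hNv, hF.otherColors_eq (mem_insert_of_mem hx) hNx,
      Sym2.eq_swap (a := x) (b := v)]
    exact eqOrDisjoint_pair_add _ _ _

theorem exists_insert_vertex [DecidableEq V] (hF : IsFlowOn G A F) (hN : IsNeighborTriple G v a b d)
    (hv : v ∉ A) (ha : a ∉ A) (hb₀ : F s(v, b) ≠ 0) (hd₀ : F s(v, d) ≠ 0)
    (hbd : F s(v, b) ≠ F s(v, d)) :
    ∃ F' : Sym2 V → M, IsFlowOn G (insert v A) F' ∧ ∀ e ≠ s(v, a), F' e = F e := by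
  have hA := hF.update hv ha (F s(v, b) + F s(v, d))
  have hb : s(v, b) ≠ s(v, a) := fun h => hN.ne₁₂ (Sym2.congr_right.1 h).symm
  have hd : s(v, d) ≠ s(v, a) := fun h => hN.ne₁₃ (Sym2.congr_right.1 h).symm
  refine ⟨_, ⟨forall_mem_insert _ _ _ |>.2 ⟨?_, hA.vertexSum_eq_zero⟩,
    forall_mem_insert _ _ _ |>.2 ⟨fun u hu => ?_, hA.ne_zero⟩⟩,
    fun e he => Function.update_of_ne he ..⟩
  · rw [hN.vertexSum_eq, Function.update_self, Function.update_of_ne hb, Function.update_of_ne hd,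
      add_assoc, ZModModule.add_self]
  · rcases (hN.adj_iff u).1 hu with rfl | rfl | rfl
    · rwa [Function.update_self, ← ZModModule.sub_eq_add, sub_ne_zero]
    · rwa [Function.update_of_ne hb]
    · rwa [Function.update_of_ne hd]

end IsFlowOn

end FlowColorings

section EndPieces

variable {V : Type*} [Fintype V] {G : SimpleGraph V} [DecidableRel G.Adj]
variable {A B K : Finset V} {F : Sym2 V → Color} {v w a b d s t : V}

theorem IsRelativeFlow.not_passesThrough (hF : IsRelativeFlow G A F)
    (hN : IsNeighborTriple G v a b d) (hv : v ∈ A) (ha : a ∉ A) (hb : b ∉ A) :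
    ¬ PassesThrough G F v := by
  rintro ⟨z, hz, hne⟩
  have ha₀ := hF.fst_eq_zero v hv a hN.adj₁ ha
  have hb₀ := hF.fst_eq_zero v hv b hN.adj₂ hb
  rcases (hN.adj_iff z).1 hz with rfl | rfl | rfl
  · exact hne ha₀
  · exact hne hb₀
  · exact hne (by rw [hF.eq_add hv hN, Prod.fst_add, ha₀, hb₀, add_zero])

theorem fst_eq_zero_of_not_passesThrough (hv : ¬ PassesThrough G F v) {x : Color}
    (hx : x ∈ colorsAt G F v) : x.1 = 0 := by
  obtain ⟨z, hz, rfl⟩ := mem_image.1 hx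
  exact by_contra fun hne => hv ⟨z, (G.mem_neighborFinset v z).1 hz, hne⟩

variable [DecidableEq V]

theorem CutsAtLeast.exists_relativeFlow_not_passesThrough_of_mem (hK : CutsAtLeast G 3 K)
    (hN : IsNeighborTriple G t w a b) (ht : t ∈ K) (hw : w ∉ K) (ha : a ∈ K) (hb : b ∈ K) :
    ∃ F, IsRelativeFlow G K F ∧ ¬ PassesThrough G F t := by
  have ha' : a ∈ K.erase t := mem_erase.2 ⟨hN.adj₂.ne', ha⟩
  have hb' : b ∈ K.erase t := mem_erase.2 ⟨hN.adj₃.ne', hb⟩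
  have ht' : t ∉ K.erase t := notMem_erase t K
  have hw' : w ∉ K.erase t := fun h => hw (mem_of_mem_erase h)
  obtain ⟨F, hF, hne⟩ := (hK.mono (erase_subset t K)).exists_relativeFlow_ne ha' ht' hN.adj₂.symm
    hb' ht' hN.adj₃.symm fun h => hN.ne₂₃ (Prod.mk_inj.1 h).1
  have ha₀ := hF.fst_eq_zero a ha' t hN.adj₂.symm ht'
  have hb₀ := hF.fst_eq_zero b hb' t hN.adj₃.symm ht'
  have haF := hF.ne_zero a ha' t hN.adj₂.symm
  have hbF := hF.ne_zero b hb' t hN.adj₃.symm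
  rw [Sym2.eq_swap] at ha₀ haF hb₀ hbF
  rw [Sym2.eq_swap, Sym2.eq_swap (a := b)] at hne
  obtain ⟨F', hF', heq⟩ := hF.exists_insert_vertex hN ht' hw' haF hbF hne
  rw [insert_erase ht] at hF'
  have haF' := heq s(t, a) fun h => hN.ne₁₂ (Sym2.congr_right.1 h).symm
  have hbF' := heq s(t, b) fun h => hN.ne₁₃ (Sym2.congr_right.1 h).symm
  have hfst (z) (hz : G.Adj t z) : (F' s(t, z)).1 = 0 := by
    rcases (hN.adj_iff z).1 hz with rfl | rfl | rfl
    · rw [hF'.eq_add ht hN.rotate, haF', hbF', Prod.fst_add, ha₀, hb₀, add_zero]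
    · rwa [haF']
    · rwa [hbF']
  refine ⟨F', ⟨hF', fun v hv u hvu hu => ?_⟩, fun ⟨z, hz, hz₀⟩ => hz₀ (hfst z hz)⟩
  rcases eq_or_ne v t with rfl | hvt
  · exact hfst u hvu
  · have hv' := mem_erase.2 ⟨hvt, hv⟩
    rw [heq _ (mk_ne_mk_of_mem hv' ht' hw')]
    exact hF.fst_eq_zero v hv' u hvu fun h => hu (mem_of_mem_erase h)

theorem CutsAtLeast.exists_relativeFlow_not_passesThrough (hK : CutsAtLeast G 3 K)
    (hN : IsNeighborTriple G t w a b) (ht : t ∈ K) (hw : w ∉ K) :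
    ∃ F, IsRelativeFlow G K F ∧ ¬ PassesThrough G F t := by
  obtain ⟨F, hF⟩ := (hK.mono_left (Nat.le_succ 2)).exists_relativeFlow
  by_cases ha : a ∈ K
  · by_cases hb : b ∈ K
    · exact hK.exists_relativeFlow_not_passesThrough_of_mem hN ht hw ha hb
    · exact ⟨F, hF, hF.not_passesThrough hN.swap ht hw hb⟩
  · exact ⟨F, hF, hF.not_passesThrough hN ht hw ha⟩

theorem IsNormalOn.insert_vertex_of_disjoint {C : Type*} [DecidableEq C] [Zero C] {c : Sym2 V → C}
    (h : IsNormalOn G A c) (hN : IsNeighborTriple G v a b d) (ha : a ∉ A)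
    (hnodup : [0, c s(v, a), c s(v, b), c s(v, d)].Nodup)
    (hb : Disjoint {c s(v, d), c s(v, a)} (otherColors G c b v))
    (hd : Disjoint {c s(v, a), c s(v, b)} (otherColors G c d v)) :
    IsNormalOn G (insert v A) c := by
  refine h.insert_vertex hN hnodup fun x hx hvx => .inr ?_
  simp only [List.nodup_cons, List.mem_cons, List.not_mem_nil, or_false, not_or] at hnodup
  obtain ⟨-, ⟨hab, had⟩, hbd, -⟩ := hnodup
  rcases (hN.adj_iff x).1 hvx with rfl | rfl | rfl
  · exact absurd hx ha
  · rwa [hN.rotate.otherColors_eq hbd (Ne.symm hab)]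
  · rwa [hN.rotate.rotate.otherColors_eq (Ne.symm had) (Ne.symm hbd)]

theorem IsNeighborTriple.cutSize_singleton (hN : IsNeighborTriple G v a b d) :
    cutSize G {v} = 3 := by
  have hedges : G.interedges {v} {v}ᶜ = {(v, a), (v, b), (v, d)} := by
    ext ⟨x, y⟩
    simp only [mk_mem_interedges_iff, mem_singleton, mem_compl, mem_insert, Prod.mk_inj]
    grind [hN.adj_iff y, hN.adj₁.ne, hN.adj₂.ne, hN.adj₃.ne]
  rw [cutSize, hedges, card_eq_three]
  exact ⟨_, _, _, by simp [hN.ne₁₂], by simp [hN.ne₁₃], by simp [hN.ne₂₃], rfl⟩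

variable (G) in
/-- A minimal vertex set `B` left by exactly two edges, from `w₁` to `o₁` and from `w₂` to `o₂`.
Such a set is found next to every bridge, and is colored separately from the rest. -/
structure IsEndPiece (B : Finset V) (w₁ w₂ o₁ o₂ : V) : Prop where
  boundary : IsBoundary G B ![w₁, w₂] ![o₁, o₂]
  three_le_cutSize : ∀ K ⊂ B, K.Nonempty → 3 ≤ cutSize G K

variable (G) in
/-- A normal coloring of an end piece whose colors at the two exits satisfy what is needed for
gluing it to the rest of the graph. -/
structure IsEndColoring (B : Finset V) (w₁ w₂ o₁ o₂ : V) (c : Sym2 V → Color) : Prop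
    extends IsNormalOn G B c where
  notMem₁ : c s(w₁, o₁) ∉ colorsAt G c w₂
  notMem₂ : c s(w₂, o₂) ∉ colorsAt G c w₁
  eqOrDisjoint_exits : EqOrDisjoint (otherColors G c w₁ o₁) (otherColors G c w₂ o₂)

namespace IsEndPiece

variable {w₁ w₂ o₁ o₂ s₁ t₁ s₂ t₂ m : V}

theorem symm (h : IsEndPiece G B w₁ w₂ o₁ o₂) : IsEndPiece G B w₂ w₁ o₂ o₁ := by
  refine ⟨⟨?_, fun x y => ?_⟩, h.three_le_cutSize⟩
  · have := h.boundary.injective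
    simp only [Function.Injective, Fin.forall_fin_succ] at this ⊢
    simp_all [eq_comm]
  · rw [h.boundary.mem_interedges_iff]
    simp [Fin.exists_fin_succ, or_comm]

theorem mem (h : IsEndPiece G B w₁ w₂ o₁ o₂) : w₁ ∈ B := h.boundary.mem 0

theorem notMem (h : IsEndPiece G B w₁ w₂ o₁ o₂) : o₁ ∉ B := h.boundary.notMem 0

theorem adj (h : IsEndPiece G B w₁ w₂ o₁ o₂) : G.Adj w₁ o₁ := h.boundary.adj 0

theorem cutsAtLeast (h : IsEndPiece G B w₁ w₂ o₁ o₂) (hK : K ⊂ B) : CutsAtLeast G 3 K :=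
  fun L hL hne => h.three_le_cutSize L (hL.trans_ssubset hK) hne

theorem cutSize_eq_two_or_five_le (h : IsEndPiece G B w₁ w₂ o₁ o₂) (hK : K ⊆ B) (h₁ : w₁ ∈ K)
    (h₂ : w₂ ∈ K) : cutSize G K = 2 ∨ 5 ≤ cutSize G K := by
  rcases hK.eq_or_ssubset with rfl | hlt
  · exact .inl h.boundary.cutSize_eq
  · right
    have hcompl := h.three_le_cutSize (B \ K) (sdiff_ssubset hK ⟨w₁, h₁⟩)
      (sdiff_nonempty.2 hlt.2)
    rw [cutSize_of_subset sdiff_subset, h.boundary.card_interedges sdiff_subset,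
      Finset.sdiff_sdiff_eq_self hK, card_interedges_comm] at hcompl
    rw [cutSize_of_subset hK, h.boundary.card_interedges hK]
    have hexit : ∀ i, ![w₁, w₂] i ∈ K := Fin.forall_fin_two.2 ⟨h₁, h₂⟩
    rw [filter_false_of_mem fun i _ hi => (mem_sdiff.1 hi).2 (hexit i), card_empty] at hcompl
    rw [filter_true_of_mem fun i _ => hexit i, card_univ, Fintype.card_fin]
    omega

theorem ne (h : IsEndPiece G B w₁ w₂ o₁ o₂) (hG : IsCubic G) : w₁ ≠ w₂ := by
  rintro rfl
  obtain ⟨s, t, hN⟩ := hG.exists_isNeighborTriple_of_adj h.adj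
  have hcut := h.cutSize_eq_two_or_five_le (singleton_subset_iff.2 h.mem) (mem_singleton_self _)
    (mem_singleton_self _)
  rw [hN.cutSize_singleton] at hcut
  omega

theorem not_adj (h : IsEndPiece G B w₁ w₂ o₁ o₂) (hG : IsCubic G) : ¬ G.Adj w₁ w₂ := by
  intro hadj
  obtain ⟨_, _, hN₁⟩ := hG.exists_isNeighborTriple_of_adj h.adj
  obtain ⟨_, _, hN₂⟩ := hG.exists_isNeighborTriple_of_adj h.symm.adj
  have hadd := cutSize_add_cutSize (G := G) (disjoint_singleton.2 (h.ne hG))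
  rw [hN₁.cutSize_singleton, hN₂.cutSize_singleton] at hadd
  have hone : #(G.interedges {w₁} {w₂}) = 1 :=
    le_antisymm (by simpa using G.card_interedges_le_mul {w₁} {w₂}) <|
      card_pos.2 ⟨(w₁, w₂), by simpa [mk_mem_interedges_iff] using hadj⟩
  have hcut := h.cutSize_eq_two_or_five_le (K := {w₁} ∪ {w₂})
    (by simp [insert_subset_iff, h.mem, h.symm.mem]) (by simp) (by simp)
  omega

theorem mem_of_adj (h : IsEndPiece G B w₁ w₂ o₁ o₂) {x y : V} (hx : x ∈ B) (hxy : G.Adj x y)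
    (h₁ : x = w₁ → y ≠ o₁) (h₂ : x = w₂ → y ≠ o₂) : y ∈ B := by
  by_contra hy
  rcases Fin.exists_fin_two.1 <| (h.boundary.mem_interedges_iff x y).1
    (G.mk_mem_interedges_iff.2 ⟨hx, mem_compl.2 hy, hxy⟩) with ⟨rfl, rfl⟩ | ⟨rfl, rfl⟩
  · exact h₁ rfl rfl
  · exact h₂ rfl rfl

theorem mem_of_isNeighborTriple (h : IsEndPiece G B w₁ w₂ o₁ o₂) (hG : IsCubic G)
    (hN : IsNeighborTriple G w₁ o₁ s t) : s ∈ B ∧ t ∈ B :=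
  ⟨h.mem_of_adj h.mem hN.adj₂ (fun _ => hN.ne₁₂.symm) fun heq => absurd heq (h.ne hG),
    h.mem_of_adj h.mem hN.adj₃ (fun _ => hN.ne₁₃.symm) fun heq => absurd heq (h.ne hG)⟩

theorem isBoundary_of_common_neighbor (h : IsEndPiece G B w₁ w₂ o₁ o₂) (hG : IsCubic G)
    (hN₁ : IsNeighborTriple G w₁ o₁ s t₁) (hN₂ : IsNeighborTriple G w₂ o₂ s t₂)
    (hN : IsNeighborTriple G s w₁ w₂ m) :
    IsBoundary G (B \ {w₁, w₂, s}) ![t₂, t₁, m] ![w₂, w₁, s] := by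
  have hnadj := h.not_adj hG
  obtain ⟨hs, ht₁⟩ := h.mem_of_isNeighborTriple hG hN₁
  have ht₂ := (h.symm.mem_of_isNeighborTriple hG hN₂).2
  have hm : m ∈ B := h.mem_of_adj hs hN.adj₃ (fun heq => absurd heq hN.adj₁.ne)
    fun heq => absurd heq hN.adj₂.ne
  refine ⟨fun i j hij => ?_, fun x y => ⟨fun hxy => ?_, ?_⟩⟩
  · have hinj : Function.Injective ![w₂, w₁, s] := by
      simp [Function.Injective, Fin.forall_fin_succ, hN.ne₁₂, hN.ne₁₂.symm, hN.adj₁.ne,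
        hN.adj₁.ne', hN.adj₂.ne, hN.adj₂.ne']
    exact hinj (Prod.mk_inj.1 hij).2
  · simp only [mk_mem_interedges_iff, mem_compl, mem_sdiff, mem_insert, mem_singleton] at hxy
    obtain ⟨⟨hx, hxne⟩, hy, hadj⟩ := hxy
    have hyB := h.mem_of_adj hx hadj
    have hadj₁ := hN₁.adj_iff x
    have hadj₂ := hN₂.adj_iff x
    have hadjs := hN.adj_iff x
    have hcases : y = w₂ ∧ x = t₂ ∨ y = w₁ ∧ x = t₁ ∨ y = s ∧ x = m := by
      grind [h.notMem, h.symm.notMem, hadj.symm]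
    rcases hcases with ⟨rfl, rfl⟩ | ⟨rfl, rfl⟩ | ⟨rfl, rfl⟩
    exacts [⟨0, rfl, rfl⟩, ⟨1, rfl, rfl⟩, ⟨2, rfl, rfl⟩]
  · rintro ⟨i, rfl, rfl⟩
    simp only [mk_mem_interedges_iff, mem_compl, mem_sdiff, mem_insert, mem_singleton]
    have hst₁ := hN₁.ne₂₃
    have hst₂ := hN₂.ne₂₃
    have h₁ := hN₁.adj₃
    have h₂ := hN₂.adj₃
    have hm := hN.adj₃
    fin_cases i <;> simp only [Fin.zero_eta, Fin.mk_one, Fin.reduceFinMk, Matrix.cons_val] <;>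
      grind [h₁.ne, h₂.ne, hm.ne, h₁.symm, h₂.symm, hm.symm, hN.ne₁₃, hN.ne₂₃]

theorem exists_relativeFlow_of_common_neighbor (h : IsEndPiece G B w₁ w₂ o₁ o₂) (hG : IsCubic G)
    (hN₁ : IsNeighborTriple G w₁ o₁ s t₁) (hN₂ : IsNeighborTriple G w₂ o₂ s t₂)
    (hN : IsNeighborTriple G s w₁ w₂ m) :
    ∃ F, IsRelativeFlow G (B \ {w₁, w₂, s}) F ∧ ¬ PassesThrough G F t₂ ∧
      F s(t₂, w₂) + F s(t₁, w₁) + F s(m, s) = 0 := by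
  have hboundary := h.isBoundary_of_common_neighbor hG hN₁ hN₂ hN
  have hlt : B \ {w₁, w₂, s} ⊂ B :=
    ssubset_iff_subset_not_subset.2 ⟨sdiff_subset, fun hB => by simpa using hB h.mem⟩
  obtain ⟨b, d, hNt⟩ := hG.exists_isNeighborTriple_of_adj hN₂.adj₃.symm
  obtain ⟨F, hF, hpass⟩ := (h.cutsAtLeast hlt).exists_relativeFlow_not_passesThrough hNt
    (hboundary.mem 0) (hboundary.notMem 0)
  have hsum := hboundary.cutSum_eq F
  rw [cutSum_eq_zero hF.vertexSum_eq_zero, Fin.sum_univ_three] at hsum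
  exact ⟨F, hF, hpass, hsum.symm⟩

theorem exists_isFlowOn_insert_insert (hF : IsRelativeFlow G K F)
    (hN₁ : IsNeighborTriple G w₁ o₁ s t₁) (hN : IsNeighborTriple G s w₁ w₂ m) (ht₁ : t₁ ∈ K)
    (hm : m ∈ K) (hw₁ : w₁ ∉ K) (hw₂ : w₂ ∉ K) (hs : s ∉ K) (ho₁ : o₁ ∉ K)
    (hw₂o₁ : w₂ ≠ o₁) :
    ∃ c : Sym2 V → Color, IsFlowOn G (insert w₁ (insert s K)) c ∧ c s(w₂, s) = (1, 0) ∧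
      ∀ v ∈ K, ∀ u, c s(v, u) = F s(v, u) := by
  have hmF := hF.fst_eq_zero m hm s hN.adj₃.symm hs
  have hmF₀ := hF.ne_zero m hm s hN.adj₃.symm
  have htF := hF.fst_eq_zero t₁ ht₁ w₁ hN₁.adj₃.symm hw₁
  have htF₀ := hF.ne_zero t₁ ht₁ w₁ hN₁.adj₃.symm
  have hm₀ : Function.update F s(w₂, s) (1, 0) s(s, m) = F s(m, s) := by
    rw [Sym2.eq_swap (a := s), Function.update_of_ne (mk_ne_mk_of_mem hm hw₂ hs)]
  have hw₂₀ : Function.update F s(w₂, s) (1, 0) s(s, w₂) = (1, 0) := by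
    rw [Sym2.eq_swap (a := s), Function.update_self]
  obtain ⟨c₁, hc₁, heq₁⟩ := (hF.update hw₂ hs (1, 0)).exists_insert_vertex hN hs hw₁
    (by rw [hw₂₀]; decide) (by rwa [hm₀])
    (by rw [hw₂₀, hm₀]; exact fun h => one_ne_zero ((congrArg Prod.fst h).trans hmF))
  have hc₁K (v) (hv : v ∈ K) (u) : c₁ s(v, u) = F s(v, u) := by
    rw [heq₁ _ (mk_ne_mk_of_mem hv hs hw₁), Function.update_of_ne (mk_ne_mk_of_mem hv hw₂ hs)]
  have hc₁w₂ : c₁ s(w₂, s) = (1, 0) := by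
    rw [heq₁ _ (by simp [hN.ne₁₂.symm, hN.adj₂.ne']), Function.update_self]
  have hc₁w₁ : c₁ s(w₁, s) = (1, 0) + F s(m, s) := by
    rw [Sym2.eq_swap, hc₁.eq_add (mem_insert_self s K) hN.rotate, Sym2.eq_swap, hc₁w₂,
      Sym2.eq_swap, hc₁K m hm]
  have hc₁t₁ : c₁ s(w₁, t₁) = F s(t₁, w₁) := by rw [Sym2.eq_swap, hc₁K t₁ ht₁]
  have hfst : c₁ s(w₁, s) ≠ c₁ s(w₁, t₁) := by
    rw [hc₁w₁, hc₁t₁]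
    exact fun h => one_ne_zero (α := ZMod 2) (by simpa [hmF, htF] using congrArg Prod.fst h)
  obtain ⟨c, hc, heq⟩ := hc₁.exists_insert_vertex hN₁ (by simp [hw₁, hN.adj₁.ne'])
    (by simp [ho₁, hN₁.ne₁₂]) (hc₁.ne_zero s (mem_insert_self s K) w₁ hN.adj₁ <| Sym2.eq_swap ▸ ·)
    (hc₁t₁ ▸ htF₀) hfst
  refine ⟨c, hc, ?_, fun v hv u => ?_⟩
  · rw [heq _ (by simp [hN.ne₁₂.symm, hw₂o₁]), hc₁w₂]
  · rw [heq _ (mk_ne_mk_of_mem hv hw₁ ho₁), hc₁K v hv]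

theorem exists_isFlowOn_erase_of_common_neighbor (h : IsEndPiece G B w₁ w₂ o₁ o₂)
    (hG : IsCubic G) (hN₁ : IsNeighborTriple G w₁ o₁ s t₁) (hN₂ : IsNeighborTriple G w₂ o₂ s t₂)
    (hN : IsNeighborTriple G s w₁ w₂ m) :
    ∃ c : Sym2 V → Color, IsFlowOn G (B.erase w₂) c ∧ ¬ PassesThrough G c t₂ ∧
      (c s(w₁, t₁)).1 = 0 ∧ c s(s, m) = c s(w₂, t₂) + c s(w₁, t₁) ∧
      c s(w₂, s) = (1, 0) ∧ c s(w₂, o₂) = (1, 0) + c s(w₁, t₁) := by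
  have hboundary := h.isBoundary_of_common_neighbor hG hN₁ hN₂ hN
  have hs := (h.mem_of_isNeighborTriple hG hN₁).1
  have hne := h.ne hG
  have hw₁ := h.mem
  have hw₂ : w₂ ∉ B.erase w₂ := notMem_erase w₂ B
  have ho₂ : o₂ ∉ B.erase w₂ := fun ho => h.symm.notMem (mem_of_mem_erase ho)
  have hinsert : insert w₁ (insert s (B \ {w₁, w₂, s})) = B.erase w₂ := by grind [hN₂.adj₂.ne]
  have hK {v : V} (hv : v ∈ B \ {w₁, w₂, s}) : v ∈ B.erase w₂ := by grind
  obtain ⟨F, hF, hpass, hsum⟩ := h.exists_relativeFlow_of_common_neighbor hG hN₁ hN₂ hN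
  obtain ⟨c₀, hc₀, hπ₀, heq₀⟩ := exists_isFlowOn_insert_insert hF hN₁ hN (hboundary.mem 1)
    (hboundary.mem 2) (hboundary.notMem 1) (hboundary.notMem 0) (hboundary.notMem 2)
    (fun ho => h.notMem (mem_sdiff.1 ho).1) (fun heq => h.notMem (heq ▸ h.symm.mem))
  rw [hinsert] at hc₀
  have heq (v) (hv : v ∈ B \ {w₁, w₂, s}) (u) :
      Function.update c₀ s(w₂, o₂) ((1, 0) + F s(t₁, w₁)) s(v, u) = F s(v, u) := by
    rw [Function.update_of_ne (mk_ne_mk_of_mem (hK hv) hw₂ ho₂), heq₀ v hv]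
  have ht₁ : Function.update c₀ s(w₂, o₂) ((1, 0) + F s(t₁, w₁)) s(w₁, t₁) = F s(t₁, w₁) := by
    rw [Sym2.eq_swap (a := w₁), heq t₁ (hboundary.mem 1)]
  refine ⟨_, hc₀.update hw₂ ho₂ ((1, 0) + F s(t₁, w₁)), ?_, ?_, ?_, ?_, ?_⟩
  · exact fun ⟨z, hz, hz₀⟩ => hpass ⟨z, hz, heq t₂ (hboundary.mem 0) z ▸ hz₀⟩
  · rw [ht₁]
    exact hF.fst_eq_zero t₁ (hboundary.mem 1) w₁ hN₁.adj₃.symm (hboundary.notMem 1)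
  · rw [ht₁, Sym2.eq_swap (a := s), heq m (hboundary.mem 2), Sym2.eq_swap (a := w₂) (b := t₂),
      heq t₂ (hboundary.mem 0)]
    rwa [← ZModModule.sub_eq_add, sub_eq_zero, eq_comm] at hsum
  · rw [Function.update_of_ne fun heq => hN₂.ne₁₂ (Sym2.congr_right.1 heq).symm, hπ₀]
  · rw [Function.update_self, ht₁]

theorem exists_isNormalOn_of_common_neighbor (h : IsEndPiece G B w₁ w₂ o₁ o₂)
    (hG : IsCubic G) (hN₁ : IsNeighborTriple G w₁ o₁ s t₁) (hN₂ : IsNeighborTriple G w₂ o₂ s t₂)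
    (hN : IsNeighborTriple G s w₁ w₂ m) :
    ∃ c : Sym2 V → Color, IsNormalOn G B c ∧ (c s(w₁, t₁)).1 = 0 ∧ (c s(w₂, t₂)).1 = 0 ∧
      c s(w₁, t₁) ≠ 0 ∧ c s(w₂, t₂) ≠ 0 ∧ c s(w₂, t₂) + c s(w₁, t₁) ≠ 0 ∧ c s(w₂, s) = (1, 0) ∧
      c s(w₂, o₂) = (1, 0) + c s(w₁, t₁) ∧
      c s(w₁, s) = (1, 0) + (c s(w₂, t₂) + c s(w₁, t₁)) ∧ c s(w₁, o₁) = (1, 0) + c s(w₂, t₂) := by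
  obtain ⟨c, hc, hpass, hy, hm, hπ, hx⟩ :=
    h.exists_isFlowOn_erase_of_common_neighbor hG hN₁ hN₂ hN
  have hw₁ : w₁ ∈ B.erase w₂ := mem_erase.2 ⟨h.ne hG, h.mem⟩
  have hs : s ∈ B.erase w₂ := mem_erase.2 ⟨hN₂.adj₂.ne', (h.mem_of_isNeighborTriple hG hN₁).1⟩
  have ht₂ : t₂ ∈ B.erase w₂ :=
    mem_erase.2 ⟨hN₂.adj₃.ne', (h.symm.mem_of_isNeighborTriple hG hN₂).2⟩
  have ho₂ : o₂ ∉ B.erase w₂ := fun ho => h.symm.notMem (mem_of_mem_erase ho)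
  have hq : (c s(w₂, t₂)).1 = 0 := by_contra fun hne =>
    hpass ⟨w₂, hN₂.adj₃.symm, Sym2.eq_swap ▸ hne⟩
  have hq₀ : c s(w₂, t₂) ≠ 0 := Sym2.eq_swap ▸ hc.ne_zero t₂ ht₂ w₂ hN₂.adj₃.symm
  have hy₀ := hc.ne_zero w₁ hw₁ t₁ hN₁.adj₃
  have hm₀ := hm ▸ hc.ne_zero s hs m hN.adj₃
  have hsw₁ := hc.eq_add hs hN.rotate
  have hother := hc.otherColors_eq hs hN.rotate
  rw [Sym2.eq_swap (a := s) (b := w₂), hm, hπ] at hsw₁ hother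
  rw [Sym2.eq_swap] at hsw₁
  have hw₁o₁ : c s(w₁, o₁) = (1, 0) + c s(w₂, t₂) := by
    rw [hc.eq_add hw₁ hN₁.rotate, hsw₁, add_assoc, add_assoc, ZModModule.add_self, add_zero]
  have hpass' {x : Color} (hx : x ∈ otherColors G c t₂ w₂) : x.1 = 0 :=
    fst_eq_zero_of_not_passesThrough hpass (mem_of_mem_erase hx)
  refine ⟨c, ?_, hy, hq, hy₀, hq₀, hm₀, hπ, hx, hsw₁, hw₁o₁⟩
  rw [← insert_erase h.symm.mem]
  refine (hc.isNormalOn hG).insert_vertex_of_disjoint hN₂ ho₂ ?_ ?_ ?_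
  · rw [hx, hπ]
    exact (by decide : ∀ y q : Color, y.1 = 0 → q.1 = 0 → y ≠ 0 → q ≠ 0 →
      [0, (1, 0) + y, (1, 0), q].Nodup) _ _ hy hq hy₀ hq₀
  · rw [hx, hother]
    exact (by decide : ∀ y q : Color, y.1 = 0 → q.1 = 0 → y ≠ 0 → q ≠ 0 → q + y ≠ 0 →
      Disjoint {q, (1, 0) + y} {q + y, q + y + (1, 0)}) _ _ hy hq hy₀ hq₀ hm₀
  · rw [hx, hπ, disjoint_insert_left, disjoint_singleton_left]
    exact ⟨fun hmem => by simpa [hy] using hpass' hmem, fun hmem => by simpa using hpass' hmem⟩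

theorem exists_isEndColoring_of_common_neighbor (h : IsEndPiece G B w₁ w₂ o₁ o₂)
    (hG : IsCubic G) (hN₁ : IsNeighborTriple G w₁ o₁ s t₁) (hN₂ : IsNeighborTriple G w₂ o₂ s t₂) :
    ∃ c, IsEndColoring G B w₁ w₂ o₁ o₂ c := by
  obtain ⟨m, hN⟩ := hG.exists_isNeighborTriple_of_adj_of_adj hN₁.adj₂.symm hN₂.adj₂.symm (h.ne hG)
  obtain ⟨c, hc, hy, hq, hy₀, hq₀, hne, hw₂s, hw₂o₂, hw₁s, hw₁o₁⟩ :=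
    h.exists_isNormalOn_of_common_neighbor hG hN₁ hN₂ hN
  refine ⟨c, hc, ?_, ?_, .inr ?_⟩
  · rw [hN₂.colorsAt_eq, hw₁o₁, hw₂o₂, hw₂s]
    exact (by decide : ∀ y q : Color, y.1 = 0 → q.1 = 0 → q ≠ 0 → q + y ≠ 0 →
      (1, 0) + q ∉ ({(1, 0) + y, (1, 0), q} : Finset Color)) _ _ hy hq hq₀ hne
  · rw [hN₁.colorsAt_eq, hw₁o₁, hw₂o₂, hw₁s]
    exact (by decide : ∀ y q : Color, y.1 = 0 → q.1 = 0 → y ≠ 0 → q ≠ 0 → q + y ≠ 0 →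
      (1, 0) + y ∉ ({(1, 0) + q, (1, 0) + (q + y), y} : Finset Color)) _ _ hy hq hy₀ hq₀ hne
  · rw [hc.otherColors_eq h.mem hN₁, hc.otherColors_eq h.symm.mem hN₂, hw₁s, hw₂s]
    exact (by decide : ∀ y q : Color, y.1 = 0 → q.1 = 0 → q ≠ 0 → q + y ≠ 0 →
      Disjoint ({(1, 0) + (q + y), y} : Finset Color) {(1, 0), q}) _ _ hy hq hq₀ hne

end IsEndPiece

end EndPieces

section DisjointNeighborhoods

variable {V : Type*} [Fintype V] {G : SimpleGraph V} [DecidableRel G.Adj]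
variable {A B : Finset V} {F : Sym2 V → Color} {v w a b d w₁ w₂ o₁ o₂ s₁ t₁ s₂ t₂ : V}

theorem IsFlowOn.exists_otherColors_eq_of_passesThrough (hF : IsFlowOn G A F) (hG : IsCubic G)
    (hv : v ∈ A) (hvw : G.Adj v w) (hpass : PassesThrough G F v) (hfst : (F s(v, w)).1 = 0) :
    ∃ a : Color, a.1 ≠ 0 ∧ otherColors G F v w = {a, a + F s(v, w)} := by
  obtain ⟨z, hz, hne⟩ := hpass
  obtain ⟨d, hN⟩ := hG.exists_isNeighborTriple_of_adj_of_adj hvw hz fun h => hne (h ▸ hfst)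
  exact ⟨_, hne, hF.otherColors_eq hv hN⟩

set_option synthInstance.maxSize 400 in
theorem exists_fst_ne_zero_disjoint {p q a d : Color} (hp : p.1 = 0) (hq : q.1 = 0) (hpq : p ≠ q)
    (ha : a.1 ≠ 0) (hd : d.1 ≠ 0) :
    ∃ x : Color, x.1 ≠ 0 ∧ Disjoint ({q, x} : Finset Color) {a, a + p} ∧
      Disjoint ({x, p} : Finset Color) {d, d + q} := by
  revert p q a d
  decide +kernel

set_option synthInstance.maxSize 400 in
theorem eq_or_eq_of_fst_eq_zero : ∀ p q : Color, p.1 = 0 → q.1 = 0 → p ≠ 0 → q ≠ 0 → p ≠ q →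
    ∀ y : Color, y.1 = 0 → y ≠ 0 → y ≠ p + q → y = p ∨ y = q := by
  decide +kernel

theorem pair_eq_pair_of_add_eq_add {p q y z : Color} (hp : p.1 = 0) (hq : q.1 = 0) (hy : y.1 = 0)
    (hp₀ : p ≠ 0) (hq₀ : q ≠ 0) (hy₀ : y ≠ 0) (hz₀ : z ≠ 0) (hpq : p ≠ q) (hsum : p + q = y + z) :
    ({y, z} : Finset Color) = {p, q} := by
  have hy' : y ≠ p + q := fun h => hz₀ (by simpa [h] using hsum)
  rcases eq_or_eq_of_fst_eq_zero p q hp hq hp₀ hq₀ hpq y hy hy₀ hy' with rfl | rfl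
  · rw [add_left_cancel hsum]
  · rw [add_left_cancel ((add_comm y p).trans hsum), pair_comm]

theorem IsFlowOn.exists_isNormalOn_insert [DecidableEq V] (hF : IsFlowOn G A F) (hG : IsCubic G)
    (hN : IsNeighborTriple G v a b d) (hv : v ∉ A) (ha : a ∉ A) (hb : b ∈ A) (hd : d ∈ A)
    (hb₁ : (F s(b, v)).1 = 0) (hd₁ : (F s(d, v)).1 = 0) (hbd : F s(b, v) ≠ F s(d, v))
    (hpb : PassesThrough G F b) (hpd : PassesThrough G F d) :
    ∃ x : Color, x.1 ≠ 0 ∧ IsNormalOn G (insert v A) (Function.update F s(v, a) x) := by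
  obtain ⟨y, hy, hother_b⟩ := hF.exists_otherColors_eq_of_passesThrough hG hb hN.adj₂.symm hpb hb₁
  obtain ⟨z, hz, hother_d⟩ := hF.exists_otherColors_eq_of_passesThrough hG hd hN.adj₃.symm hpd hd₁
  obtain ⟨x, hx, hxb, hxd⟩ := exists_fst_ne_zero_disjoint hb₁ hd₁ hbd hy hz
  have heq (u) (hu : u ∈ A) (w) : Function.update F s(v, a) x s(u, w) = F s(u, w) :=
    Function.update_of_ne (mk_ne_mk_of_mem hu hv ha) ..
  have hb' : Function.update F s(v, a) x s(v, b) = F s(b, v) := by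
    rw [Sym2.eq_swap (a := v) (b := b), heq b hb]
  have hd' : Function.update F s(v, a) x s(v, d) = F s(d, v) := by
    rw [Sym2.eq_swap (a := v) (b := d), heq d hd]
  refine ⟨x, hx, ((hF.update hv ha x).isNormalOn hG).insert_vertex_of_disjoint hN ha ?_ ?_ ?_⟩
  · rw [Function.update_self, hb', hd']
    have hb₀ := hF.ne_zero b hb v hN.adj₂.symm
    have hd₀ := hF.ne_zero d hd v hN.adj₃.symm
    have hne {p : Color} (hp : p.1 = 0) : x ≠ p := fun h => hx (h ▸ hp)
    simpa [hb₀.symm, hd₀.symm, hbd, hne hb₁, hne hd₁] using (hne Prod.fst_zero).symm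
  · rwa [otherColors_congr (fun z _ => heq b hb z) hN.adj₂.symm, Function.update_self,
      hd', hother_b]
  · rwa [otherColors_congr (fun z _ => heq d hd z) hN.adj₃.symm, Function.update_self,
      hb', hother_d]

namespace IsEndPiece

variable [DecidableEq V]

theorem isBoundary_sdiff_pair (h : IsEndPiece G B w₁ w₂ o₁ o₂) (hG : IsCubic G)
    (hN₁ : IsNeighborTriple G w₁ o₁ s₁ t₁) (hN₂ : IsNeighborTriple G w₂ o₂ s₂ t₂) :
    IsBoundary G (B \ {w₁, w₂}) ![s₂, t₂, s₁, t₁] ![w₂, w₂, w₁, w₁] := by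
  have hne := h.ne hG
  have hnadj := h.not_adj hG
  obtain ⟨hs₁, ht₁⟩ := h.mem_of_isNeighborTriple hG hN₁
  obtain ⟨hs₂, ht₂⟩ := h.symm.mem_of_isNeighborTriple hG hN₂
  refine ⟨?_, fun x y => ⟨fun hxy => ?_, ?_⟩⟩
  · simp [Function.Injective, Fin.forall_fin_succ, hne, hne.symm, hN₁.ne₂₃, hN₁.ne₂₃.symm,
      hN₂.ne₂₃, hN₂.ne₂₃.symm]
  · simp only [mk_mem_interedges_iff, mem_compl, mem_sdiff, mem_insert, mem_singleton] at hxy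
    obtain ⟨⟨hx, hxne⟩, hy, hadj⟩ := hxy
    have hyB := h.mem_of_adj hx hadj
    have hadj₁ := hN₁.adj_iff x
    have hadj₂ := hN₂.adj_iff x
    have hcases : (y = w₂ ∧ x = s₂ ∨ y = w₂ ∧ x = t₂) ∨ y = w₁ ∧ x = s₁ ∨ y = w₁ ∧ x = t₁ := by
      grind [h.notMem, h.symm.notMem, hadj.symm]
    rcases hcases with (⟨rfl, rfl⟩ | ⟨rfl, rfl⟩) | ⟨rfl, rfl⟩ | ⟨rfl, rfl⟩
    exacts [⟨0, rfl, rfl⟩, ⟨1, rfl, rfl⟩, ⟨2, rfl, rfl⟩, ⟨3, rfl, rfl⟩]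
  · rintro ⟨i, rfl, rfl⟩
    simp only [mk_mem_interedges_iff, mem_compl, mem_sdiff, mem_insert, mem_singleton]
    have hs₁' := hN₁.adj₂
    have hs₂' := hN₂.adj₂
    have ht₁' := hN₁.adj₃
    have ht₂' := hN₂.adj₃
    fin_cases i <;> simp only [Fin.zero_eta, Fin.mk_one, Fin.reduceFinMk, Matrix.cons_val] <;>
      grind [hs₁'.ne, hs₂'.ne, ht₁'.ne, ht₂'.ne, hs₁'.symm, hs₂'.symm, ht₁'.symm, ht₂'.symm]

theorem exists_isFlowOn_erase_of_disjoint_neighbors (h : IsEndPiece G B w₁ w₂ o₁ o₂)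
    (hG : IsCubic G) (hN₁ : IsNeighborTriple G w₁ o₁ s₁ t₁) (hN₂ : IsNeighborTriple G w₂ o₂ s₂ t₂)
    (hss : s₁ ≠ s₂) (hst : s₁ ≠ t₂) (hts : t₁ ≠ s₂) (htt : t₁ ≠ t₂) :
    ∃ c : Sym2 V → Color, IsFlowOn G (B.erase w₂) c ∧
      PassesThrough G c s₂ ∧ PassesThrough G c t₂ ∧ c s(s₂, w₂) ≠ c s(t₂, w₂) ∧
      (c s(s₂, w₂)).1 = 0 ∧ (c s(t₂, w₂)).1 = 0 ∧ (c s(s₁, w₁)).1 = 0 ∧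
      c s(s₂, w₂) + c s(t₂, w₂) = c s(s₁, w₁) + c s(t₁, w₁) := by
  have hboundary := h.isBoundary_sdiff_pair hG hN₁ hN₂
  have hlt : B \ {w₁, w₂} ⊂ B :=
    ssubset_iff_subset_not_subset.2 ⟨sdiff_subset, fun hB => by simpa using hB h.mem⟩
  have hinj : Function.Injective ![s₂, t₂, s₁, t₁] := by
    simp [Function.Injective, Fin.forall_fin_succ, hN₁.ne₂₃, hN₁.ne₂₃.symm, hN₂.ne₂₃,
      hN₂.ne₂₃.symm, hss, hss.symm, hst, hst.symm, hts, hts.symm, htt, htt.symm]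
  have hinsert : insert w₁ (B \ {w₁, w₂}) = B.erase w₂ := by grind [h.ne hG, h.mem]
  have ho₁ : o₁ ∉ B \ {w₁, w₂} := fun ho => h.notMem (mem_sdiff.1 ho).1
  obtain ⟨F, hF, hne, hs₂, ht₂⟩ := (h.cutsAtLeast hlt).exists_relativeFlow_four hboundary hinj
  have hsum : F s(s₂, w₂) + F s(t₂, w₂) = F s(s₁, w₁) + F s(t₁, w₁) := by
    have hcut := hboundary.cutSum_eq F
    rwa [cutSum_eq_zero hF.vertexSum_eq_zero, Fin.sum_univ_four, add_assoc,
      ← ZModModule.sub_eq_add, eq_comm, sub_eq_zero] at hcut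
  have hs₁F := hF.ne_zero s₁ (hboundary.mem 2) w₁ (hboundary.adj 2)
  have ht₁F := hF.ne_zero t₁ (hboundary.mem 3) w₁ (hboundary.adj 3)
  have hfst (i) := hF.fst_eq_zero _ (hboundary.mem i) _ (hboundary.adj i) (hboundary.notMem i)
  have hne₁ : F s(s₁, w₁) ≠ F s(t₁, w₁) := by
    intro heq
    rw [heq, ZModModule.add_self, ← ZModModule.sub_eq_add, sub_eq_zero] at hsum
    exact hne hsum
  rw [Sym2.eq_swap] at hs₁F ht₁F
  rw [Sym2.eq_swap, Sym2.eq_swap (a := t₁)] at hne₁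
  obtain ⟨c, hc, heq⟩ := hF.exists_insert_vertex hN₁ (hboundary.notMem 2) ho₁ hs₁F ht₁F hne₁
  have heq' (i : Fin 4) (u) : c s(![s₂, t₂, s₁, t₁] i, u) = F s(![s₂, t₂, s₁, t₁] i, u) :=
    heq _ (mk_ne_mk_of_mem (hboundary.mem i) (hboundary.notMem 2) ho₁)
  have hpass (i : Fin 4) (hi : PassesThrough G F (![s₂, t₂, s₁, t₁] i)) :
      PassesThrough G c (![s₂, t₂, s₁, t₁] i) :=
    hi.imp fun z hz => ⟨hz.1, heq' i z ▸ hz.2⟩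
  have hfst' (i) := (congrArg Prod.fst (heq' i _)).trans (hfst i)
  refine ⟨c, hinsert ▸ hc, hpass 0 hs₂, hpass 1 ht₂, ?_, hfst' 0, hfst' 1, hfst' 2, ?_⟩
  · exact heq' 0 w₂ ▸ heq' 1 w₂ ▸ hne
  · exact (congrArg₂ _ (heq' 0 w₂) (heq' 1 w₂)).trans
      (hsum.trans (congrArg₂ _ (heq' 2 w₁) (heq' 3 w₁)).symm)

theorem exists_isNormalOn_of_disjoint_neighbors (h : IsEndPiece G B w₁ w₂ o₁ o₂)
    (hG : IsCubic G) (hN₁ : IsNeighborTriple G w₁ o₁ s₁ t₁) (hN₂ : IsNeighborTriple G w₂ o₂ s₂ t₂)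
    (hss : s₁ ≠ s₂) (hst : s₁ ≠ t₂) (hts : t₁ ≠ s₂) (htt : t₁ ≠ t₂) :
    ∃ c : Sym2 V → Color, IsNormalOn G B c ∧ (c s(w₂, o₂)).1 ≠ 0 ∧
      (c s(w₂, s₂)).1 = 0 ∧ (c s(w₂, t₂)).1 = 0 ∧ c s(w₁, o₁) = c s(w₂, s₂) + c s(w₂, t₂) ∧
      ({c s(w₁, s₁), c s(w₁, t₁)} : Finset Color) = {c s(w₂, s₂), c s(w₂, t₂)} := by
  have hw₁ : w₁ ∈ B.erase w₂ := mem_erase.2 ⟨h.ne hG, h.mem⟩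
  have hw₂ : w₂ ∉ B.erase w₂ := notMem_erase w₂ B
  have ho₂ : o₂ ∉ B.erase w₂ := fun ho => h.symm.notMem (mem_of_mem_erase ho)
  have hs₂ := mem_erase.2 ⟨hN₂.adj₂.ne', (h.symm.mem_of_isNeighborTriple hG hN₂).1⟩
  have ht₂ := mem_erase.2 ⟨hN₂.adj₃.ne', (h.symm.mem_of_isNeighborTriple hG hN₂).2⟩
  obtain ⟨F, hF, hps, hpt, hpq, hp, hq, hy, hsum⟩ :=
    h.exists_isFlowOn_erase_of_disjoint_neighbors hG hN₁ hN₂ hss hst hts htt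
  obtain ⟨x, hx, hc⟩ :=
    hF.exists_isNormalOn_insert hG hN₂ hw₂ ho₂ hs₂ ht₂ hp hq hpq hps hpt
  rw [insert_erase h.symm.mem] at hc
  have hpair := pair_eq_pair_of_add_eq_add hp hq hy (hF.ne_zero s₂ hs₂ w₂ hN₂.adj₂.symm)
    (hF.ne_zero t₂ ht₂ w₂ hN₂.adj₃.symm) (Sym2.eq_swap ▸ hF.ne_zero w₁ hw₁ s₁ hN₁.adj₂)
    (Sym2.eq_swap ▸ hF.ne_zero w₁ hw₁ t₁ hN₁.adj₃) hpq hsum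
  have heq (u) (hu : u ∈ B.erase w₂) (z) : Function.update F s(w₂, o₂) x s(u, z) = F s(u, z) :=
    Function.update_of_ne (mk_ne_mk_of_mem hu hw₂ ho₂) ..
  refine ⟨_, hc, by rwa [Function.update_self], ?_⟩
  rw [Sym2.eq_swap (a := w₂) (b := s₂), heq s₂ hs₂, Sym2.eq_swap (a := w₂) (b := t₂), heq t₂ ht₂,
    heq w₁ hw₁, heq w₁ hw₁, heq w₁ hw₁, hF.eq_add hw₁ hN₁.rotate, Sym2.eq_swap (b := s₁),
    Sym2.eq_swap (b := t₁)]
  exact ⟨hp, hq, hsum.symm, hpair⟩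

theorem exists_isEndColoring_of_disjoint_neighbors (h : IsEndPiece G B w₁ w₂ o₁ o₂)
    (hG : IsCubic G) (hN₁ : IsNeighborTriple G w₁ o₁ s₁ t₁) (hN₂ : IsNeighborTriple G w₂ o₂ s₂ t₂)
    (hss : s₁ ≠ s₂) (hst : s₁ ≠ t₂) (hts : t₁ ≠ s₂) (htt : t₁ ≠ t₂) :
    ∃ c, IsEndColoring G B w₁ w₂ o₁ o₂ c := by
  obtain ⟨c, hc, hx, hp, hq, hw₁o₁, hpair⟩ :=
    h.exists_isNormalOn_of_disjoint_neighbors hG hN₁ hN₂ hss hst hts htt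
  have hnodup := hc.nodup h.symm.mem hN₂
  simp only [List.nodup_cons, List.mem_cons, List.not_mem_nil, or_false, not_or] at hnodup
  have hne {a : Color} (ha : a.1 = 0) : c s(w₂, o₂) ≠ a := fun h => hx (h ▸ ha)
  have hadd : (c s(w₂, s₂) + c s(w₂, t₂)).1 = 0 := by rw [Prod.fst_add, hp, hq, add_zero]
  refine ⟨c, hc, ?_, ?_, .inl ?_⟩
  · rw [hN₂.colorsAt_eq, hw₁o₁]
    simp [Ne.symm hnodup.1.2.1, Ne.symm hnodup.1.2.2, (hne hadd).symm]
  · rw [hN₁.colorsAt_eq, hpair, hw₁o₁]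
    simp [hne hp, hne hq, hne hadd]
  · rw [hc.otherColors_eq h.mem hN₁, hc.otherColors_eq h.symm.mem hN₂, hpair]

theorem exists_isEndColoring (h : IsEndPiece G B w₁ w₂ o₁ o₂) (hG : IsCubic G) :
    ∃ c, IsEndColoring G B w₁ w₂ o₁ o₂ c := by
  obtain ⟨s₁, t₁, hN₁⟩ := hG.exists_isNeighborTriple_of_adj h.adj
  obtain ⟨s₂, t₂, hN₂⟩ := hG.exists_isNeighborTriple_of_adj h.symm.adj
  by_cases hss : s₁ = s₂
  · exact h.exists_isEndColoring_of_common_neighbor hG hN₁ (hss ▸ hN₂)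
  by_cases hst : s₁ = t₂
  · exact h.exists_isEndColoring_of_common_neighbor hG hN₁ (hst ▸ hN₂.swap)
  by_cases hts : t₁ = s₂
  · exact h.exists_isEndColoring_of_common_neighbor hG hN₁.swap (hts ▸ hN₂)
  by_cases htt : t₁ = t₂
  · exact h.exists_isEndColoring_of_common_neighbor hG hN₁.swap (htt ▸ hN₂.swap)
  exact h.exists_isEndColoring_of_disjoint_neighbors hG hN₁ hN₂ hss hst hts htt

end IsEndPiece

end DisjointNeighborhoods

section Recoloring

-- Here and below, the distinctness of the shorter lists prunes the search made by `decide`.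
set_option synthInstance.maxSize 400 in
theorem exists_pair_eqOrDisjoint : ∀ f g : Color, [0, f, g].Nodup →
    ∀ p ∉ [0, f], ∀ q ∉ [0, g], ∃ i, [0, f, g, i].Nodup ∧ ∃ j, [0, f, g, i, j].Nodup ∧
      EqOrDisjoint ({i, j} : Finset Color) {p, p + f} ∧
      EqOrDisjoint ({i, j} : Finset Color) {q, q + g} := by
  decide +kernel

set_option synthInstance.maxSize 400 in
theorem exists_disjoint_pairs_eqOrDisjoint : ∀ f g : Color, [0, f, g].Nodup →
    ∀ p ∉ [0, f], ∀ q ∉ [0, g], ∃ i, [0, f, g, i].Nodup ∧ ∃ j, [0, f, g, i, j].Nodup ∧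
      EqOrDisjoint ({i, j} : Finset Color) {p, p + f} ∧
      ∃ k, [0, f, g, i, j, k].Nodup ∧ ∃ l, [0, f, g, i, j, k, l].Nodup ∧
        EqOrDisjoint ({k, l} : Finset Color) {q, q + g} := by
  decide +kernel

theorem exists_perm_eqOrDisjoint {x y s₁ t₁ s₂ t₂ f g p q : Color}
    (h₁ : [0, x, y, s₁, t₁].Nodup) (h₂ : [0, x, y, s₂, t₂].Nodup)
    (h : EqOrDisjoint ({s₁, t₁} : Finset Color) {s₂, t₂})
    (hfg : [0, f, g].Nodup) (hp : p ∉ [0, f]) (hq : q ∉ [0, g]) :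
    ∃ σ : Equiv.Perm Color, σ 0 = 0 ∧ σ x = f ∧ σ y = g ∧
      EqOrDisjoint (({s₁, t₁} : Finset Color).image σ) {p, p + f} ∧
      EqOrDisjoint (({s₂, t₂} : Finset Color).image σ) {q, q + g} := by
  rcases h with heq | hdisj
  · obtain ⟨i, -, j, hij, hip, hiq⟩ := exists_pair_eqOrDisjoint f g hfg p hp q hq
    obtain ⟨σ, hσ⟩ := exists_perm_map_eq h₁ hij rfl
    simp only [List.map_cons, List.map_nil, List.cons.injEq, and_true] at hσ
    obtain ⟨h₀, hx, hy, hs, ht⟩ := hσ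
    refine ⟨σ, h₀, hx, hy, ?_, ?_⟩
    · rwa [image_insert, image_singleton, hs, ht]
    · rwa [← heq, image_insert, image_singleton, hs, ht]
  · have hnodup : [0, x, y, s₁, t₁, s₂, t₂].Nodup := by
      simp only [disjoint_insert_left, disjoint_singleton_left, mem_insert, mem_singleton] at hdisj
      simp only [List.nodup_cons, List.mem_cons] at h₁ h₂ ⊢
      grind
    obtain ⟨i, -, j, -, hip, k, -, l, hl, hkq⟩ :=
      exists_disjoint_pairs_eqOrDisjoint f g hfg p hp q hq
    obtain ⟨σ, hσ⟩ := exists_perm_map_eq hnodup hl rfl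
    simp only [List.map_cons, List.map_nil, List.cons.injEq, and_true] at hσ
    obtain ⟨h₀, hx, hy, hs₁, ht₁, hs₂, ht₂⟩ := hσ
    refine ⟨σ, h₀, hx, hy, ?_, ?_⟩
    · rwa [image_insert, image_singleton, hs₁, ht₁]
    · rwa [image_insert, image_singleton, hs₂, ht₂]

end Recoloring

section EndPieceGluing

variable {V : Type*} [Fintype V] {G : SimpleGraph V} [DecidableRel G.Adj]
variable {A B X : Finset V} {F c : Sym2 V → Color} {v a b d w₁ w₂ o₁ o₂ : V}

theorem IsNormalOn.nodup_of_notMem_colorsAt {C : Type*} [DecidableEq C] [Zero C] {c : Sym2 V → C}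
    (hc : IsNormalOn G X c) (hv : v ∈ X) (hN : IsNeighborTriple G v a b d) {y : C} (hy₀ : y ≠ 0)
    (hy : y ∉ colorsAt G c v) : [0, c s(v, a), y, c s(v, b), c s(v, d)].Nodup := by
  have h := hc.nodup hv hN
  rw [hN.colorsAt_eq] at hy
  simp only [List.nodup_cons, List.mem_cons, mem_insert, mem_singleton] at h hy ⊢
  grind

theorem IsFlowOn.exists_otherColors_eq {M : Type*} [AddCommGroup M] [Module (ZMod 2) M]
    [DecidableEq M] {F : Sym2 V → M} (hF : IsFlowOn G X F) (hG : IsCubic G) (hv : v ∈ X)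
    (hva : G.Adj v a) : ∃ p ∉ [0, F s(v, a)], otherColors G F v a = {p, p + F s(v, a)} := by
  obtain ⟨b, d, hN⟩ := hG.exists_isNeighborTriple_of_adj hva
  refine ⟨F s(v, b), ?_, hF.otherColors_eq hv hN⟩
  simp [hF.ne_zero v hv b hN.adj₂, (hF.ne hv hN).symm]

variable [DecidableEq V]

theorem IsEndColoring.exists_perm (hc : IsEndColoring G B w₁ w₂ o₁ o₂ c)
    (hB : IsEndPiece G B w₁ w₂ o₁ o₂) (hG : IsCubic G) {f g p q : Color}
    (hfg : [0, f, g].Nodup) (hp : p ∉ [0, f]) (hq : q ∉ [0, g]) :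
    ∃ σ : Equiv.Perm Color, σ 0 = 0 ∧ σ (c s(w₁, o₁)) = f ∧ σ (c s(w₂, o₂)) = g ∧
      EqOrDisjoint ((otherColors G c w₁ o₁).image σ) {p, p + f} ∧
      EqOrDisjoint ((otherColors G c w₂ o₂).image σ) {q, q + g} := by
  obtain ⟨s₁, t₁, hN₁⟩ := hG.exists_isNeighborTriple_of_adj hB.adj
  obtain ⟨s₂, t₂, hN₂⟩ := hG.exists_isNeighborTriple_of_adj hB.symm.adj
  have ne_zero {v w} (hv : v ∈ B) (hvw : G.Adj v w) : c s(v, w) ≠ 0 := fun h =>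
    hc.zero_notMem v hv (h ▸ mem_colorsAt hvw)
  have h₁ := hc.nodup_of_notMem_colorsAt hB.mem hN₁ (ne_zero hB.symm.mem hN₂.adj₁) hc.notMem₂
  have h₂ := hc.nodup_of_notMem_colorsAt hB.symm.mem hN₂ (ne_zero hB.mem hN₁.adj₁) hc.notMem₁
  have hexits := hc.eqOrDisjoint_exits
  rw [hc.otherColors_eq hB.mem hN₁, hc.otherColors_eq hB.symm.mem hN₂] at hexits ⊢
  exact exists_perm_eqOrDisjoint h₁ (((List.Perm.swap _ _ _).cons 0).nodup_iff.1 h₂) hexits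
    hfg hp hq

theorem IsFlowOn.exists_isNormalOn_union (hF : IsFlowOn G A F) (hG : IsCubic G)
    (hB : IsEndPiece G B w₁ w₂ o₁ o₂) (hd : Disjoint A B) (ho₁ : o₁ ∈ A) (ho₂ : o₂ ∈ A)
    (hne : F s(o₁, w₁) ≠ F s(o₂, w₂)) :
    ∃ c : Sym2 V → Color, IsNormalOn G (A ∪ B) c := by
  obtain ⟨c, hc⟩ := hB.exists_isEndColoring hG
  obtain ⟨p, hp, hotherp⟩ := hF.exists_otherColors_eq hG ho₁ hB.adj.symm
  obtain ⟨q, hq, hotherq⟩ := hF.exists_otherColors_eq hG ho₂ hB.symm.adj.symm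
  have hnodup : [0, F s(o₁, w₁), F s(o₂, w₂)].Nodup := by
    simp [hne, (hF.ne_zero o₁ ho₁ w₁ hB.adj.symm).symm,
      (hF.ne_zero o₂ ho₂ w₂ hB.symm.adj.symm).symm]
  obtain ⟨σ, hσ₀, hσ₁, hσ₂, hσp, hσq⟩ := hc.exists_perm hB hG hnodup hp hq
  rw [← hotherp, ← otherColors_comp σ.injective] at hσp
  rw [← hotherq, ← otherColors_comp σ.injective] at hσq
  have crossing {x y} (hx : x ∈ A) (hy : y ∈ B) (hxy : G.Adj x y) :
      x = o₁ ∧ y = w₁ ∨ x = o₂ ∧ y = w₂ := by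
    obtain ⟨i, hi, hi'⟩ := (hB.boundary.mem_interedges_iff y x).1
      (G.mk_mem_interedges_iff.2 ⟨hy, mem_compl.2 (disjoint_left.1 hd hx), hxy.symm⟩)
    fin_cases i
    · exact .inl ⟨hi'.symm, hi.symm⟩
    · exact .inr ⟨hi'.symm, hi.symm⟩
  refine ⟨_, (hF.isNormalOn hG).union (hc.comp_perm σ hσ₀) hd (fun x hx y hy hxy => ?_)
    fun x hx y hy hxy => ?_⟩
  · rcases crossing hx hy hxy with ⟨rfl, rfl⟩ | ⟨rfl, rfl⟩
    · exact hσ₁.symm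
    · exact hσ₂.symm
  · rcases crossing hx hy hxy with ⟨rfl, rfl⟩ | ⟨rfl, rfl⟩
    · exact hσp.symm
    · exact hσq.symm

theorem IsFlowOn.of_erase {M : Type*} [AddCommGroup M] [Module (ZMod 2) M] {F : Sym2 V → M}
    (hF : IsFlowOn G (X.erase v) F) (hv : v ∈ X) (hX : cutSize G X = 0) : IsFlowOn G X F := by
  have hempty : G.interedges X Xᶜ = ∅ := card_eq_zero.1 hX
  have mem_of_adj {x y} (hx : x ∈ X) (hxy : G.Adj x y) : y ∈ X := by
    by_contra hy
    exact notMem_empty _ (hempty ▸ G.mk_mem_interedges_iff.2 ⟨hx, mem_compl.2 hy, hxy⟩)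
  have hsum := sum_vertexSum_eq_cutSum (G := G) F X
  rw [cutSum, hempty, sum_empty, ← add_sum_erase X _ hv, sum_eq_zero hF.vertexSum_eq_zero,
    add_zero] at hsum
  rw [← insert_erase hv]
  refine ⟨forall_mem_insert _ _ _ |>.2 ⟨hsum, hF.vertexSum_eq_zero⟩,
    forall_mem_insert _ _ _ |>.2 ⟨fun u hvu => ?_, hF.ne_zero⟩⟩
  rw [Sym2.eq_swap]
  exact hF.ne_zero u (mem_erase.2 ⟨hvu.ne', mem_of_adj hv hvu⟩) v hvu.symm

theorem exists_isNormalOn_of_cutSize_eq_zero (hG : IsCubic G)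
    (hX : ∀ K ⊂ X, K.Nonempty → 2 ≤ cutSize G K) (h₀ : cutSize G X = 0) :
    ∃ c : Sym2 V → Color, IsNormalOn G X c := by
  rcases X.eq_empty_or_nonempty with rfl | ⟨v, hv⟩
  · exact ⟨0, .empty⟩
  · have hcuts : CutsAtLeast G 2 (X.erase v) := fun K hK =>
      hX K (hK.trans_ssubset (erase_ssubset hv))
    obtain ⟨F, hF⟩ := hcuts.exists_relativeFlow
    exact ⟨F, (hF.toIsFlowOn.of_erase hv h₀).isNormalOn hG⟩

theorem exists_isEndPiece_of_cutSize_eq_two (hB : cutSize G B = 2)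
    (h₃ : ∀ K ⊂ B, K.Nonempty → 3 ≤ cutSize G K) :
    ∃ w₁ w₂ o₁ o₂, IsEndPiece G B w₁ w₂ o₁ o₂ := by
  obtain ⟨⟨w₁, o₁⟩, ⟨w₂, o₂⟩, hne, hedges⟩ := card_eq_two.1 hB
  refine ⟨w₁, w₂, o₁, o₂, ⟨fun i j hij => ?_, fun x y => ?_⟩, h₃⟩
  · fin_cases i <;> fin_cases j <;> simp_all
  · simp [hedges, Fin.exists_fin_two, eq_comm]

theorem cutSize_erase_eq_two (hN : IsNeighborTriple G v a b d)
    (hX : G.interedges X Xᶜ = {(v, a)}) : cutSize G (X.erase v) = 2 := by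
  obtain ⟨hv, ha, hva⟩ := G.mk_mem_interedges_iff.1 (hX ▸ mem_singleton_self (v, a))
  have hsub : {v} ⊆ X := singleton_subset_iff.2 hv
  have hout : G.interedges {v} Xᶜ = {(v, a)} :=
    ((G.interedges_mono hsub subset_rfl).trans hX.subset).antisymm
      (singleton_subset_iff.2 (G.mk_mem_interedges_iff.2 ⟨mem_singleton_self v, ha, hva⟩))
  have hone : cutSize G X = 1 := card_eq_one.2 ⟨_, hX⟩
  have hsingle := cutSize_of_subset (G := G) hsub
  have hsum := cutSize_add_cutSize (G := G) (disjoint_sdiff (s := {v}) (t := X))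
  rw [hN.cutSize_singleton, hout, card_singleton] at hsingle
  rw [union_sdiff_of_subset hsub, hone, hN.cutSize_singleton] at hsum
  rw [erase_eq]
  omega

theorem exists_isEndPiece_of_cutSize_eq_one (hG : IsCubic G)
    (hX : ∀ K ⊂ X, K.Nonempty → 2 ≤ cutSize G K) (h₁ : cutSize G X = 1) :
    ∃ B ⊆ X, G.interedges B Xᶜ = ∅ ∧ ∃ w₁ w₂ o₁ o₂, IsEndPiece G B w₁ w₂ o₁ o₂ := by
  obtain ⟨⟨u, o⟩, hedge⟩ := card_eq_one.1 h₁
  obtain ⟨hu, -, huo⟩ := G.mk_mem_interedges_iff.1 (hedge ▸ mem_singleton_self (u, o))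
  obtain ⟨a, b, hN⟩ := hG.exists_isNeighborTriple_of_adj huo
  have htwo := cutSize_erase_eq_two hN hedge
  have hne : (X.erase u).Nonempty := by
    by_contra h
    simp [not_nonempty_iff_eq_empty.1 h, cutSize] at htwo
  obtain ⟨B, hBu, hmin⟩ := exists_minimal_le_of_wellFoundedLT
    (fun K : Finset V => K.Nonempty ∧ cutSize G K = 2) _ ⟨hne, htwo⟩
  have hBX : B ⊂ X := hBu.trans_ssubset (erase_ssubset hu)
  refine ⟨B, hBX.1, ?_, exists_isEndPiece_of_cutSize_eq_two hmin.prop.2 fun K hK hKne => ?_⟩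
  · refine eq_empty_of_forall_notMem fun ⟨x, y⟩ hxy => ?_
    obtain ⟨hx, hy, hadj⟩ := G.mk_mem_interedges_iff.1 hxy
    have hxy' := G.mk_mem_interedges_iff.2 ⟨hBX.1 hx, hy, hadj⟩
    rw [hedge, mem_singleton, Prod.mk_inj] at hxy'
    exact notMem_erase u X (hBu (hxy'.1 ▸ hx))
  · exact (hX K (hK.trans hBX) hKne).lt_of_ne fun h => hmin.not_prop_of_lt hK ⟨hKne, h.symm⟩

theorem exists_isNormalOn_of_cutSize_eq_one (hG : IsCubic G)
    (hX : ∀ K ⊂ X, K.Nonempty → 2 ≤ cutSize G K) (h₁ : cutSize G X = 1) :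
    ∃ c : Sym2 V → Color, IsNormalOn G X c := by
  obtain ⟨B, hBX, hBout, w₁, w₂, o₁, o₂, hB⟩ := exists_isEndPiece_of_cutSize_eq_one hG hX h₁
  have mem_of_exit {w o} (hw : w ∈ B) (ho : o ∉ B) (hwo : G.Adj w o) : o ∈ X \ B := by
    refine mem_sdiff.2 ⟨by_contra fun hoX => ?_, ho⟩
    exact notMem_empty _ (hBout ▸ G.mk_mem_interedges_iff.2 ⟨hw, mem_compl.2 hoX, hwo⟩)
  have ho₁ := mem_of_exit hB.mem hB.notMem hB.adj
  have ho₂ := mem_of_exit hB.symm.mem hB.symm.notMem hB.symm.adj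
  have hcuts : CutsAtLeast G 2 (X \ B) := fun K hK =>
    hX K (hK.trans_ssubset (sdiff_ssubset hBX ⟨w₁, hB.mem⟩))
  obtain ⟨F, hF⟩ := hcuts.exists_relativeFlow
  have hthree : cutSize G (X \ B) = 3 := by
    have htwo : cutSize G B = 2 := hB.boundary.cutSize_eq
    have hsplit := cutSize_of_subset (G := G) hBX
    have hsum := cutSize_add_cutSize (G := G) (disjoint_sdiff (s := B) (t := X))
    rw [union_sdiff_of_subset hBX] at hsum
    rw [hBout, card_empty] at hsplit
    omega
  have mem_cut {w o} (hw : w ∈ B) (ho : o ∈ X \ B) (hwo : G.Adj w o) :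
      (o, w) ∈ G.interedges (X \ B) (X \ B)ᶜ :=
    G.mk_mem_interedges_iff.2
      ⟨ho, mem_compl.2 fun h => (mem_sdiff.1 h).2 hw, hwo.symm⟩
  have hne := hF.ne_of_cutSize_eq_three hthree (mem_cut hB.mem ho₁ hB.adj)
    (mem_cut hB.symm.mem ho₂ hB.symm.adj) fun h => hB.ne hG (Prod.mk_inj.1 h).2
  rw [← sdiff_union_of_subset hBX]
  exact hF.exists_isNormalOn_union hG hB sdiff_disjoint ho₁ ho₂ hne

end EndPieceGluing

theorem exists_isNormalOn {V : Type*} [Fintype V] {G : SimpleGraph V} [DecidableRel G.Adj]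
    (hG : IsCubic G) (X : Finset V) :
    ∃ c : Sym2 V → Color, IsNormalOn G X c := by
  classical
  induction X using Finset.strongInduction with
  | H X ih =>
    by_cases hsplit : ∃ A ⊂ X, A.Nonempty ∧ #(G.interedges A (X \ A)) ≤ 1
    · obtain ⟨A, hA, hne, hle⟩ := hsplit
      obtain ⟨c₁, h₁⟩ := ih A hA
      obtain ⟨c₂, h₂⟩ := ih (X \ A) (sdiff_ssubset hA.1 hne)
      rw [← union_sdiff_of_subset hA.1]
      exact h₁.exists_union hG h₂ disjoint_sdiff hle
    · have hX (K) (hK : K ⊂ X) (hne : K.Nonempty) : 2 ≤ cutSize G K := by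
        rw [cutSize_of_subset hK.1]
        exact le_add_right (not_le.1 fun hle => hsplit ⟨K, hK, hne, hle⟩)
      obtain h₀ | h₁ | h₂ : cutSize G X = 0 ∨ cutSize G X = 1 ∨ 2 ≤ cutSize G X := by omega
      · exact exists_isNormalOn_of_cutSize_eq_zero hG hX h₀
      · exact exists_isNormalOn_of_cutSize_eq_one hG hX h₁
      · have hcuts : CutsAtLeast G 2 X := fun K hK hne =>
          hK.eq_or_ssubset.elim (fun h => h ▸ h₂) (hX K · hne)
        obtain ⟨F, hF⟩ := hcuts.exists_relativeFlow
        exact ⟨F, hF.isNormalOn hG⟩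

section Transport

variable {V C D : Type*} [Fintype V] {G : SimpleGraph V} [DecidableRel G.Adj]

theorem coe_colorsAt [DecidableEq C] (c : Sym2 V → C) (v : V) :
    (colorsAt G c v : Set C) = colorSet G c v := by
  ext x
  simp only [colorsAt, coe_image, Set.mem_image, mem_coe, mem_neighborFinset, colorSet,
    incidenceSet, Set.mem_sep_iff]
  constructor
  · rintro ⟨w, hw, rfl⟩
    exact ⟨s(v, w), ⟨hw, Sym2.mem_mk_left v w⟩, rfl⟩
  · rintro ⟨e, ⟨he, hve⟩, rfl⟩
    obtain ⟨w, rfl⟩ := Sym2.mem_iff_exists.1 hve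
    exact ⟨w, he, rfl⟩

namespace IsNormalOn

variable [DecidableEq C] [Zero C] {c : Sym2 V → C} {φ : C → D}

theorem colorsAt_subset (hc : IsNormalOn G univ c) (v : V) :
    (colorsAt G c v : Set C) ⊆ {0}ᶜ :=
  Set.subset_compl_singleton_iff.2 (hc.zero_notMem v (mem_univ v))

theorem isProperEdgeColoring_comp (hc : IsNormalOn G univ c) (hG : IsCubic G)
    (hφ : Set.InjOn φ {0}ᶜ) : IsProperEdgeColoring G fun e => φ (c e) := by
  rintro e he f hf hne ⟨v, hve, hvf⟩ heq
  obtain ⟨x, rfl⟩ := Sym2.mem_iff_exists.1 hve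
  obtain ⟨y, rfl⟩ := Sym2.mem_iff_exists.1 hvf
  have hxy : x ≠ y := fun h => hne (congrArg _ h)
  obtain ⟨d, hN⟩ := hG.exists_isNeighborTriple_of_adj_of_adj he hf hxy
  have hnodup := hc.nodup (mem_univ v) hN
  have hc_eq := hφ (hc.colorsAt_subset v (mem_colorsAt he))
    (hc.colorsAt_subset v (mem_colorsAt hf)) heq
  simp [hc_eq] at hnodup

theorem isNormalEdgeColoring_comp (hc : IsNormalOn G univ c) (hG : IsCubic G)
    (hφ : Set.InjOn φ {0}ᶜ) : IsNormalEdgeColoring G fun e => φ (c e) := by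
  classical
  refine ⟨hc.isProperEdgeColoring_comp hG hφ, fun u v huv => ?_⟩
  have hcard : (colorSet G (fun e => φ (c e)) u ∪ colorSet G (fun e => φ (c e)) v).ncard =
      #(colorsAt G c u ∪ colorsAt G c v) := by
    rw [← coe_colorsAt, ← coe_colorsAt, colorsAt_comp φ c, colorsAt_comp φ c, ← coe_union,
      ← image_union, Set.ncard_coe_finset, card_image_of_injOn (hφ.mono ?_)]
    rw [coe_union]
    exact Set.union_subset (hc.colorsAt_subset u) (hc.colorsAt_subset v)
  rw [IsPoorAt, IsRichAt, hcard]
  have hother := hc.eqOrDisjoint u (mem_univ u) v (mem_univ v) huv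
  rw [otherColors, otherColors, Sym2.eq_swap (a := v) (b := u)] at hother
  exact hother.card_union (hc.card_colorsAt u (mem_univ u)) (hc.card_colorsAt v (mem_univ v))
    (mem_colorsAt huv) (Sym2.eq_swap (a := v) (b := u) ▸ mem_colorsAt huv.symm)

end IsNormalOn

end Transport

theorem exists_injOn_compl_zero_fin_seven : ∃ φ : Color → Fin 7, Set.InjOn φ {0}ᶜ := by
  obtain ⟨e⟩ : Nonempty ({x : Color // x ≠ 0} ≃ Fin 7) :=
    ⟨Fintype.equivFinOfCardEq (by simp [Fintype.card_subtype_compl])⟩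
  refine ⟨fun x => if hx : x ≠ 0 then e ⟨x, hx⟩ else 0, fun x hx y hy h => ?_⟩
  have hx' : x ≠ 0 := hx
  have hy' : y ≠ 0 := hy
  simpa [hx', hy'] using h

theorem stmt_15 {V : Type*} [Fintype V] (G : SimpleGraph V) (hG : IsCubic G) :
    ∃ c : Sym2 V → Fin 7, IsNormalEdgeColoring G c := by
  classical
  obtain ⟨c, hc⟩ := exists_isNormalOn hG univ
  obtain ⟨φ, hφ⟩ := exists_injOn_compl_zero_fin_seven
  exact ⟨_, hc.isNormalEdgeColoring_comp hG hφ⟩
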